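/- arXiv:math/9304212 — 5 statements merged into one kernel-verified Lean document; each statement's English description precedes it below -/
import Mathlib

section
/- Let K be an algebraically closed field, let C ⊆ K^n be Zariski-closed, and let π : K^n → K^k be a coordinate projection. Then there exists a Zariski-closed set F, properly contained in the Zariski closure of π(C), such that cl(π(C)) \ F ⊆ π(C); that is, the image π(C) contains the complement in its closure of a proper closed subset. -/
open Topology

/-- A subset of `K^n` is *Zariski-closed* (an affine algebraic set) if it is the common
zero set of a set of polynomials in `n` variables. -/
def ZariskiClosedSet (K : Type*) [Field K] {n : ℕ} (C : Set (Fin n → K)) : Prop :=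
  ∃ S : Set (MvPolynomial (Fin n) K), C = {x | ∀ f ∈ S, MvPolynomial.eval x f = 0}

/-- The Zariski topology on `K^n`: the topology whose closed sets are the affine
algebraic sets. -/
def zariskiTopology (K : Type*) [Field K] (n : ℕ) : TopologicalSpace (Fin n → K) :=
  TopologicalSpace.generateFrom {U | ZariskiClosedSet K Uᶜ}

/-!
The Zariski topology on `K^n` is induced from `Spec K[x₁, …, xₙ]` by sending a point to its
maximal ideal. By the Nullstellensatz, the image of a closed set under a polynomial map is the
trace on `K^k` of its image in the spectrum, so Chevalley's theorem makes it constructible.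

The rest is topology. The relative interior of `s` in `closure s` is `s ∩ interior (coborder s)`.
It is all of `s` when `s` is locally closed, and its density in `s` is inherited by unions; hence
it is dense in every constructible set. Its complement in `closure s` is the required `F`.
-/

section Constructible

variable {X : Type*} [TopologicalSpace X] {s t : Set X}

lemma subset_interior_coborder_of_isOpen (ht : IsOpen t) (h : t ∩ closure s ⊆ s) :
    t ⊆ interior (coborder s) :=
  interior_maximal (fun _ hxt hx => hx.2 (h ⟨hxt, hx.1⟩)) ht

lemma interior_coborder_inter_closure_subset : interior (coborder s) ∩ closure s ⊆ s :=
  (Set.inter_subset_inter_left _ interior_subset).trans coborder_inter_closure.subset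

lemma interior_coborder_sdiff_closure_subset_interior_coborder_union :
    interior (coborder s) \ closure t ⊆ interior (coborder (s ∪ t)) := by
  refine subset_interior_coborder_of_isOpen (isOpen_interior.sdiff isClosed_closure) ?_
  rintro x ⟨⟨hxs, hxt⟩, hx⟩
  rw [closure_union] at hx
  exact Or.inl (interior_coborder_inter_closure_subset ⟨hxs, hx.resolve_right hxt⟩)

lemma interior_coborder_sdiff_closure_sdiff_subset_interior_coborder_union :
    interior (coborder t) \ closure (s \ closure t) ⊆ interior (coborder (s ∪ t)) := by
  refine subset_interior_coborder_of_isOpen (isOpen_interior.sdiff isClosed_closure) ?_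
  rintro x ⟨⟨hxt, hxs⟩, hx⟩
  have hxt' : x ∈ closure t := by
    rw [closure_union] at hx
    by_contra hxt'
    have hx' : x ∈ closure s \ closure (closure t) :=
      ⟨hx.resolve_right hxt', by rwa [closure_closure]⟩
    exact hxs (closure_sdiff hx')
  exact Or.inr (interior_coborder_inter_closure_subset ⟨hxt, hxt'⟩)

lemma sdiff_subset_closure_inter_sdiff {u v : Set X} (hs : s ⊆ closure (s ∩ u))
    (hv : IsClosed v) : s \ v ⊆ closure (s ∩ (u \ v)) :=
  calc s \ v ⊆ vᶜ ∩ closure (s ∩ u) := fun _ hx => ⟨hx.2, hs hx.1⟩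
    _ ⊆ closure (vᶜ ∩ (s ∩ u)) := hv.isOpen_compl.inter_closure
    _ = closure (s ∩ (u \ v)) := by rw [Set.inter_comm, Set.inter_assoc, Set.sdiff_eq]

lemma union_subset_closure_inter_interior_coborder
    (hs : s ⊆ closure (s ∩ interior (coborder s)))
    (ht : t ⊆ closure (t ∩ interior (coborder t))) :
    s ∪ t ⊆ closure ((s ∪ t) ∩ interior (coborder (s ∪ t))) := by
  set d := closure ((s ∪ t) ∩ interior (coborder (s ∪ t)))
  have s_sdiff : s \ closure t ⊆ d :=
    (sdiff_subset_closure_inter_sdiff hs isClosed_closure).trans <| closure_mono <|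
      Set.inter_subset_inter Set.subset_union_left
        interior_coborder_sdiff_closure_subset_interior_coborder_union
  have t_sdiff : t \ closure (s \ closure t) ⊆ d :=
    (sdiff_subset_closure_inter_sdiff ht isClosed_closure).trans <| closure_mono <|
      Set.inter_subset_inter Set.subset_union_right
        interior_coborder_sdiff_closure_sdiff_subset_interior_coborder_union
  have t_subset : t ⊆ d :=
    (Set.subset_sdiff_union t (closure (s \ closure t))).trans <|
      Set.union_subset t_sdiff (closure_minimal s_sdiff isClosed_closure)
  have s_subset : s ⊆ d :=
    (Set.subset_sdiff_union s (closure t)).trans <|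
      Set.union_subset s_sdiff (closure_minimal t_subset isClosed_closure)
  exact Set.union_subset s_subset t_subset

lemma subset_closure_inter_interior_coborder_of_isLocallyClosed (hs : IsLocallyClosed s) :
    s ⊆ closure (s ∩ interior (coborder s)) := by
  rw [hs.isOpen_coborder.interior_eq, Set.inter_eq_left.mpr subset_coborder]
  exact subset_closure

lemma subset_closure_inter_interior_coborder_of_isConstructible (hs : IsConstructible s) :
    s ⊆ closure (s ∩ interior (coborder s)) := by
  induction s, hs using BooleanSubalgebra.closure_sdiff_sup_induction with
  | isSublattice =>
    exact ⟨fun U hU V hV => ⟨hU.1.union hV.1, hU.2.union hV.2⟩,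
      fun U hU V hV => ⟨hU.1.inter hV.1, hU.2.inter_isOpen hV.2 hV.1⟩⟩
  | bot_mem => exact ⟨isOpen_empty, .empty⟩
  | top_mem => exact ⟨isOpen_univ, .univ⟩
  | sdiff U hU V hV =>
    exact subset_closure_inter_interior_coborder_of_isLocallyClosed
      (hU.1.isLocallyClosed.inter hV.1.isClosed_compl.isLocallyClosed)
  | sup s _ t _ hs ht => exact union_subset_closure_inter_interior_coborder hs ht

theorem exists_isClosed_ssubset_closure_of_isConstructible (hs : IsConstructible s)
    (hne : s.Nonempty) : ∃ F, IsClosed F ∧ F ⊂ closure s ∧ closure s \ F ⊆ s := by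
  obtain ⟨x, hxs, hx⟩ : (s ∩ interior (coborder s)).Nonempty :=
    closure_nonempty_iff.mp <|
      hne.mono (subset_closure_inter_interior_coborder_of_isConstructible hs)
  refine ⟨closure s \ interior (coborder s), isClosed_closure.sdiff isOpen_interior,
    ⟨Set.sdiff_subset, fun h => (h (subset_closure hxs)).2 hx⟩, ?_⟩
  rw [Set.sdiff_sdiff_right_self, Set.inter_comm]
  exact interior_coborder_inter_closure_subset

end Constructible

section NoetherianSpace

open TopologicalSpace

variable {X : Type*} [TopologicalSpace X] [NoetherianSpace X]

lemma isRetrocompact_of_noetherianSpace (s : Set X) : IsRetrocompact s :=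
  fun _ _ _ => NoetherianSpace.isCompact _

lemma isConstructible_of_isClosed {s : Set X} (hs : IsClosed s) : IsConstructible s :=
  isConstructible_compl.mp <|
    (isRetrocompact_of_noetherianSpace sᶜ).isConstructible hs.isOpen_compl

end NoetherianSpace

lemma isConstructible_comap_image_of_isClosed {R A B : Type*} [CommRing R] [CommRing A]
    [CommRing B] [Algebra R A] [Algebra R B] [IsNoetherianRing A] [Algebra.FiniteType R B]
    (φ : A →ₐ[R] B) {s : Set (PrimeSpectrum B)} (hs : IsClosed s) :
    IsConstructible (PrimeSpectrum.comap φ.toRingHom '' s) := by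
  have finiteType : φ.toRingHom.FiniteType :=
    .of_comp_finiteType (f := algebraMap R A) <| by
      rw [AlgHom.toRingHom_eq_coe, φ.comp_algebraMap]
      exact RingHom.finiteType_algebraMap.mpr inferInstance
  have : IsNoetherianRing B := by
    algebraize [φ.toRingHom]
    exact Algebra.FiniteType.isNoetherianRing A B
  exact PrimeSpectrum.isConstructible_comap_image
    (RingHom.FinitePresentation.of_finiteType.mp finiteType) (isConstructible_of_isClosed hs)

section PolynomialMap

open MvPolynomial

variable {K σ τ : Type*} [Field K]

lemma pointToPoint_mem_zeroLocus_iff {x : σ → K} {S : Set (MvPolynomial σ K)} :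
    pointToPoint x ∈ PrimeSpectrum.zeroLocus S ↔ ∀ f ∈ S, eval x f = 0 :=
  forall₂_congr fun f _ => mem_vanishingIdeal_singleton_iff x f

lemma eq_of_pointToPoint_le {x y : σ → K}
    (h : (pointToPoint x : PrimeSpectrum (MvPolynomial σ K)) ≤ pointToPoint y) : x = y := by
  ext i
  have hi : X i - C (x i) ∈ vanishingIdeal K {x} := by simp
  have hyi : aeval y (X i - C (x i)) = 0 := h hi y rfl
  simpa [sub_eq_zero, eq_comm] using hyi

lemma comap_bind₁_pointToPoint (p : τ → MvPolynomial σ K) (x : σ → K) :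
    PrimeSpectrum.comap (bind₁ p).toRingHom (pointToPoint x) =
      pointToPoint fun i => eval x (p i) := by
  ext f
  simp [pointToPoint, ← aeval_eq_eval, aeval_bind₁]

lemma image_eval_zeroLocus_eq_preimage_pointToPoint [IsAlgClosed K] [Finite σ]
    (p : τ → MvPolynomial σ K) (S : Set (MvPolynomial σ K)) :
    (fun x i => eval x (p i)) '' {x | ∀ f ∈ S, eval x f = 0} =
      pointToPoint ⁻¹' (PrimeSpectrum.comap (bind₁ p).toRingHom '' PrimeSpectrum.zeroLocus S) := by
  apply Set.Subset.antisymm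
  · rintro _ ⟨x, hx, rfl⟩
    exact ⟨pointToPoint x, pointToPoint_mem_zeroLocus_iff.mpr hx, comap_bind₁_pointToPoint p x⟩
  · rintro y ⟨Q, hSQ, hQy⟩
    obtain ⟨M, hM, hQM⟩ := Ideal.exists_le_maximal Q.asIdeal Q.isPrime.ne_top
    obtain ⟨x, rfl⟩ := eq_vanishingIdeal_singleton_of_isMaximal K hM
    refine ⟨x, pointToPoint_mem_zeroLocus_iff.mp (Set.Subset.trans hSQ hQM), Eq.symm ?_⟩
    apply eq_of_pointToPoint_le
    rw [← hQy, ← comap_bind₁_pointToPoint]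
    exact Ideal.comap_mono hQM

end PolynomialMap

section Zariski

open MvPolynomial

variable {K : Type*} [Field K] {n : ℕ}

lemma zariskiClosedSet_iff_isClosed_induced {C : Set (Fin n → K)} :
    ZariskiClosedSet K C ↔
      IsClosed[.induced (pointToPoint (k := K)) PrimeSpectrum.zariskiTopology] C := by
  simp_rw [isClosed_induced_iff, PrimeSpectrum.isClosed_iff_zeroLocus, ZariskiClosedSet]
  constructor
  · rintro ⟨S, rfl⟩
    exact ⟨_, ⟨S, rfl⟩, Set.ext fun _ => pointToPoint_mem_zeroLocus_iff⟩
  · rintro ⟨_, ⟨S, rfl⟩, rfl⟩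
    exact ⟨S, Set.ext fun _ => pointToPoint_mem_zeroLocus_iff⟩

lemma zariskiTopology_eq_induced :
    zariskiTopology K n = .induced (pointToPoint (k := K)) PrimeSpectrum.zariskiTopology := by
  simp_rw [zariskiTopology, zariskiClosedSet_iff_isClosed_induced, isClosed_compl_iff]
  exact TopologicalSpace.generateFrom_setOfPred_isOpen _

lemma zariskiClosedSet_iff_isClosed {C : Set (Fin n → K)} :
    ZariskiClosedSet K C ↔ IsClosed[zariskiTopology K n] C := by
  rw [zariskiClosedSet_iff_isClosed_induced, zariskiTopology_eq_induced]

lemma isConstructible_image_eval_of_zariskiClosedSet [IsAlgClosed K] {k : ℕ}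
    (p : Fin k → MvPolynomial (Fin n) K) {C : Set (Fin n → K)} (hC : ZariskiClosedSet K C) :
    @IsConstructible _ (zariskiTopology K k) ((fun x i => eval x (p i)) '' C) := by
  let := zariskiTopology K k
  have isInducing : IsInducing (pointToPoint (k := K) (K := K) (σ := Fin k)) :=
    ⟨zariskiTopology_eq_induced⟩
  have := isInducing.noetherianSpace
  obtain ⟨S, rfl⟩ := hC
  rw [image_eval_zeroLocus_eq_preimage_pointToPoint]
  exact (isConstructible_comap_image_of_isClosed _ (PrimeSpectrum.isClosed_zeroLocus S)).preimage
    isInducing.continuous fun _ _ _ => isRetrocompact_of_noetherianSpace _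

end Zariski

theorem affine_Z1_general {K : Type*} [Field K] [IsAlgClosed K] {n k : ℕ}
    (p : Fin k → MvPolynomial (Fin n) K) (C : Set (Fin n → K)) (hC : ZariskiClosedSet K C)
    (hne : C.Nonempty) (π : (Fin n → K) → (Fin k → K))
    (hπ : π = fun x i => MvPolynomial.eval x (p i)) :
    ∃ F : Set (Fin k → K), ZariskiClosedSet K F ∧
      F ⊂ closure[zariskiTopology K k] (π '' C) ∧
      closure[zariskiTopology K k] (π '' C) \ F ⊆ π '' C := by
  let := zariskiTopology K k
  simp_rw [zariskiClosedSet_iff_isClosed]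
  exact exists_isClosed_ssubset_closure_of_isConstructible
    (hπ ▸ isConstructible_image_eval_of_zariskiClosedSet p hC) (hne.image π)

/-- Axiom (Z1) for affine space over an algebraically closed field: if `C ⊆ K^n` is a
(nonempty) Zariski-closed set and `π : K^n → K^k` is a coordinate projection, then there
is a Zariski-closed set `F`, properly contained in the Zariski closure of `π(C)`, with
`cl(π C) \ F ⊆ π(C)`. -/
theorem affine_Z1 {K : Type*} [Field K] [IsAlgClosed K] {n k : ℕ} (h : k ≤ n)
    (C : Set (Fin n → K)) (hC : ZariskiClosedSet K C) (hne : C.Nonempty)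
    (π : (Fin n → K) → (Fin k → K)) (hπ : π = fun x => x ∘ Fin.castLE h) :
    ∃ F : Set (Fin k → K), ZariskiClosedSet K F ∧
      F ⊂ closure[zariskiTopology K k] (π '' C) ∧
      closure[zariskiTopology K k] (π '' C) \ F ⊆ π '' C := by
  exact affine_Z1_general (fun i => .X (Fin.castLE h i)) C hC hne π
    (by simp [hπ, Function.comp_def])
end

section
/- Let K be an algebraically closed field and let C ⊆ K^n × K be Zariski-closed. Then there exists an integer m such that for every a ∈ K^n, the fibre C(a) = {b ∈ K : (a,b) ∈ C} either equals all of K or has at most m elements. -/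
/-!
By Hilbert's basis theorem finitely many polynomials `f ∈ T` define `C`. Substituting `a` for the
first `n` variables turns each of them into a univariate polynomial of degree at most
`f.totalDegree`. The fibre over `a` is the set of common roots of these: if they all vanish, it is
the whole line, and otherwise it lies among the roots of a nonzero one. Hence
`m = max {f.totalDegree | f ∈ T}` works for every `a`.
-/

open Polynomial

theorem setOf_common_roots_eq_univ_or_ncard_le {A : Type*} [CommRing A] [IsDomain A]
    {P : Set A[X]} {m : ℕ} (hP : ∀ p ∈ P, p.natDegree ≤ m) :
    {b : A | ∀ p ∈ P, p.eval b = 0} = Set.univ ∨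
      ({b : A | ∀ p ∈ P, p.eval b = 0}.Finite ∧ {b : A | ∀ p ∈ P, p.eval b = 0}.ncard ≤ m) := by
  by_cases all_zero : ∀ p ∈ P, p = 0
  · exact .inl <| Set.eq_univ_of_forall fun b p hp ↦ by rw [all_zero p hp, eval_zero]
  · push Not at all_zero
    obtain ⟨p, hp, p_ne_zero⟩ := all_zero
    have subset_rootSet : {b : A | ∀ p ∈ P, p.eval b = 0} ⊆ p.rootSet A := fun b hb ↦
      mem_rootSet.2 ⟨p_ne_zero, by simpa only [coe_aeval_eq_eval] using hb p hp⟩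
    have finite_rootSet := p.rootSet_finite A
    refine .inr ⟨finite_rootSet.subset subset_rootSet, ?_⟩
    calc {b : A | ∀ p ∈ P, p.eval b = 0}.ncard
        ≤ (p.rootSet A).ncard := Set.ncard_le_ncard subset_rootSet finite_rootSet
      _ ≤ p.natDegree := p.ncard_rootSet_le A
      _ ≤ m := hP p hp

/-- The affine algebraic set in `A^σ` cut out by polynomials with coefficients in `R`. -/
def commonZeros {R σ : Type*} (A : Type*) [CommSemiring R] [CommSemiring A] [Algebra R A]
    (S : Set (MvPolynomial σ R)) : Set (σ → A) :=
  {x | ∀ f ∈ S, MvPolynomial.aeval x f = 0}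

theorem exists_finset_commonZeros_eq {R σ : Type*} (A : Type*) [CommRing R] [IsNoetherianRing R]
    [CommSemiring A] [Algebra R A] [Finite σ] (S : Set (MvPolynomial σ R)) :
    ∃ T : Finset (MvPolynomial σ R), commonZeros A (R := R) T = commonZeros A S := by
  obtain ⟨T, span_T⟩ := IsNoetherian.noetherian (Ideal.span S)
  refine ⟨T, Set.ext fun x ↦ ?_⟩
  have mem_iff_span_le_ker (U : Set (MvPolynomial σ R)) :
      x ∈ commonZeros A U ↔ Ideal.span U ≤ RingHom.ker (MvPolynomial.aeval (R := R) x) :=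
    (Ideal.span_le (I := RingHom.ker (MvPolynomial.aeval (R := R) x))).symm
  rw [mem_iff_span_le_ker, mem_iff_span_le_ker, ← span_T]

section FiberPolynomial

variable {R A : Type*} [CommSemiring R] [CommSemiring A] [Algebra R A] {n : ℕ}

/-- The restriction of a polynomial in `n + 1` variables to the line `{a} × A`, as a univariate
polynomial in the last variable. -/
noncomputable def fiberPolynomial (a : Fin n → A) : MvPolynomial (Fin (n + 1)) R →ₐ[R] A[X] :=
  MvPolynomial.aeval (Fin.snoc (fun i ↦ C (a i)) X)

theorem eval_fiberPolynomial (a : Fin n → A) (f : MvPolynomial (Fin (n + 1)) R) (b : A) :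
    (fiberPolynomial a f).eval b =
      MvPolynomial.aeval (Fin.snoc a b : Fin (n + 1) → A) f := by
  have comp_eq : ((aeval b).restrictScalars R).comp (fiberPolynomial a) =
      MvPolynomial.aeval (R := R) (Fin.snoc a b : Fin (n + 1) → A) := by
    ext i
    cases i using Fin.lastCases <;> simp [fiberPolynomial]
  exact DFunLike.congr_fun comp_eq f

theorem snoc_mem_commonZeros_iff {S : Set (MvPolynomial (Fin (n + 1)) R)} {a : Fin n → A} {b : A} :
    Fin.snoc a b ∈ commonZeros A S ↔ ∀ p ∈ fiberPolynomial (R := R) a '' S, p.eval b = 0 := by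
  simp only [Set.forall_mem_image, eval_fiberPolynomial]
  rfl

theorem natDegree_fiberPolynomial_le (a : Fin n → A) (f : MvPolynomial (Fin (n + 1)) R) :
    (fiberPolynomial a f).natDegree ≤ f.totalDegree := by
  have coord_natDegree_le (i : Fin (n + 1)) :
      ((Fin.snoc (fun i ↦ C (a i)) X : Fin (n + 1) → A[X]) i).natDegree ≤ 1 := by
    cases i using Fin.lastCases <;> simp [natDegree_X_le]
  have totalDegree_map_le : (MvPolynomial.map (algebraMap R A) f).totalDegree ≤ f.totalDegree :=
    Finset.sup_mono (MvPolynomial.support_map_subset _ f)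
  rw [fiberPolynomial, ← MvPolynomial.aeval_map_algebraMap A, ← mul_one f.totalDegree]
  exact MvPolynomial.aeval_natDegree_le _ totalDegree_map_le _ coord_natDegree_le

end FiberPolynomial

theorem affine_Z2_general {R A : Type*} [CommRing R] [IsNoetherianRing R] [CommRing A] [IsDomain A]
    [Algebra R A] {n : ℕ} (S : Set (MvPolynomial (Fin (n + 1)) R)) :
    ∃ m : ℕ, ∀ a : Fin n → A,
      {b : A | Fin.snoc a b ∈ commonZeros A S} = Set.univ ∨
      ({b : A | Fin.snoc a b ∈ commonZeros A S}.Finite ∧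
        {b : A | Fin.snoc a b ∈ commonZeros A S}.ncard ≤ m) := by
  obtain ⟨T, commonZeros_T⟩ := exists_finset_commonZeros_eq A S
  refine ⟨T.sup MvPolynomial.totalDegree, fun a ↦ ?_⟩
  have natDegree_le : ∀ p ∈ fiberPolynomial (R := R) a '' T,
      p.natDegree ≤ T.sup MvPolynomial.totalDegree := by
    rintro _ ⟨f, hf, rfl⟩
    exact (natDegree_fiberPolynomial_le a f).trans (Finset.le_sup hf)
  simp only [← commonZeros_T, snoc_mem_commonZeros_iff]
  exact setOf_common_roots_eq_univ_or_ncard_le natDegree_le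

/-- Axiom (Z2) for the affine line over an algebraically closed field: if
`C ⊆ K^n × K` is Zariski-closed, then there is an integer `m` such that every fibre
`C(a) = {b ∈ K | (a, b) ∈ C}` either is all of `K` or has at most `m` elements. -/
theorem affine_Z2 {K : Type*} [Field K] [IsAlgClosed K] {n : ℕ}
    (C : Set (Fin (n + 1) → K)) (hC : ZariskiClosedSet K C) :
    ∃ m : ℕ, ∀ a : Fin n → K,
      {b : K | Fin.snoc a b ∈ C} = Set.univ ∨
      ({b : K | Fin.snoc a b ∈ C}.Finite ∧ {b : K | Fin.snoc a b ∈ C}.ncard ≤ m) := by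
  obtain ⟨S, rfl⟩ := hC
  exact affine_Z2_general S
end

section
/- Let k ⊆ K be a field extension, let m, n ≥ 1, and let a_1, …, a_m, b_1, …, b_n ∈ K be such that the family (a_1, …, a_m, b_1, …, b_n) of m + n elements is algebraically independent over k. Then the transcendence degree over k of the subfield k(a_i + b_j : 1 ≤ i ≤ m, 1 ≤ j ≤ n) generated over k by all the pairwise sums a_i + b_j equals m + n − 1. -/
/-- The transcendence degree of a (commutative ring) extension `K / k`: the supremum of
the cardinalities of subsets of `K` that are algebraically independent over `k`. -/
noncomputable def trdeg (k K : Type*) [CommRing k] [CommRing K] [Algebra k K] : Cardinal :=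
  ⨆ s : {s : Set K // AlgebraicIndependent k ((↑) : s → K)}, Cardinal.mk s.1

/-!
Fix an index `j₀`. Since `a i + b j = (a i + b j₀) + (b j - b j₀)` and
`b j - b j₀ = (a i + b j) - (a i + b j₀)`, the field is generated by the elements `a i + b j₀`
and the differences `b j - b j₀` with `j ≠ j₀`. Together with `b j₀`, these arise from the
independent family `(a, b)` by an invertible linear change of variables, so they are algebraically
independent; leaving out `b j₀` lowers the cardinality by one.
-/

open Cardinal MvPolynomial

universe u v w

theorem trdeg_eq_algebra_trdeg (k K : Type*) [CommRing k] [CommRing K] [Algebra k K] :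
    trdeg k K = Algebra.trdeg k K :=
  rfl

section Shear

variable {R A ι κ : Type*} [CommRing R] [CommRing A] [Algebra R A]

theorem algebraicIndependent_X_add_smul_X {c : ι → R} {i₀ : ι} (hc : c i₀ = 0) :
    AlgebraicIndependent R fun i => (X i + c i • X i₀ : MvPolynomial ι R) := by
  have unshear_comp_shear :
      (aeval fun i => (X i - c i • X i₀ : MvPolynomial ι R)).comp
        (aeval fun i => (X i + c i • X i₀ : MvPolynomial ι R)) = AlgHom.id R _ :=
    algHom_ext fun i => by simp [hc]
  refine Function.LeftInverse.injective (g := aeval fun i => X i - c i • X i₀) ?_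
  exact DFunLike.congr_fun unshear_comp_shear

theorem algebraicIndependent_add_smul {x : ι → A} (hx : AlgebraicIndependent R x)
    {c : ι → R} {i₀ : ι} (hc : c i₀ = 0) :
    AlgebraicIndependent R fun i => x i + c i • x i₀ := by
  simpa using hx.aeval_of_algebraicIndependent (algebraicIndependent_X_add_smul_X hc)

theorem algebraicIndependent_sumElim_add_sub {a : ι → A} {b : κ → A}
    (hab : AlgebraicIndependent R (Sum.elim a b)) (j₀ : κ) :
    AlgebraicIndependent R
      (Sum.elim (fun i => a i + b j₀) fun j : {j // j ≠ j₀} => b j - b j₀) := by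
  classical
  let c : ι ⊕ κ → R := Sum.elim (fun _ => 1) fun j => if j = j₀ then 0 else -1
  have shear_independent := algebraicIndependent_add_smul hab (c := c) (i₀ := .inr j₀) (by simp [c])
  convert shear_independent.comp (Sum.map id Subtype.val)
    (Function.injective_id.sumMap Subtype.val_injective) using 1
  ext (i | j)
  · simp [c]
  · simp [c, j.2, sub_eq_add_neg]

end Shear

theorem mk_sum_subtype_ne_add_one {ι κ : Type*} (j₀ : κ) :
    #(ι ⊕ {j : κ // j ≠ j₀}) + 1 = #(ι ⊕ κ) := by
  classical
  rw [mk_sum, mk_sum, ← mk_congr (Equiv.optionSubtypeNe j₀), mk_option, lift_add, lift_one,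
    add_assoc]

section Adjoin

variable {k : Type*} {K : Type u} [Field k] [Field K] [Algebra k K]

open scoped IntermediateField.algebraAdjoinAdjoin in
theorem lift_mk_eq_lift_trdeg_adjoin_range {ι : Type v} {x : ι → K}
    (hx : AlgebraicIndependent k x) :
    lift.{u} #ι = lift.{v} (Algebra.trdeg k (IntermediateField.adjoin k (Set.range x))) := by
  have basis_algebraAdjoin := hx.aevalEquiv.isTranscendenceBasis (.mvPolynomial ι k)
  exact (basis_algebraAdjoin.algebraMap_comp
    (A := IntermediateField.adjoin k (Set.range x))).lift_cardinalMk_eq_trdeg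

theorem adjoin_range_add_eq_adjoin_range_sumElim {ι κ : Type*} [Nonempty ι]
    (a : ι → K) (b : κ → K) (j₀ : κ) :
    IntermediateField.adjoin k (Set.range fun p : ι × κ => a p.1 + b p.2) =
      IntermediateField.adjoin k
        (Set.range (Sum.elim (fun i => a i + b j₀) fun j : {j // j ≠ j₀} => b j - b j₀)) := by
  apply le_antisymm <;> rw [IntermediateField.adjoin_le_iff]
  · have generator_mem (s : ι ⊕ {j // j ≠ j₀}) := IntermediateField.subset_adjoin k _
      (Set.mem_range_self (f := Sum.elim (fun i => a i + b j₀) (b ·.1 - b j₀)) s)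
    rintro _ ⟨⟨i, j⟩, rfl⟩
    obtain rfl | hj := eq_or_ne j j₀
    · exact generator_mem (.inl i)
    · simpa using add_mem (generator_mem (.inl i)) (generator_mem (.inr ⟨j, hj⟩))
  · have sum_mem (i : ι) (j : κ) : a i + b j ∈
        IntermediateField.adjoin k (Set.range fun p : ι × κ => a p.1 + b p.2) :=
      IntermediateField.subset_adjoin k _ ⟨(i, j), rfl⟩
    rintro _ ⟨i | j, rfl⟩
    · exact sum_mem i j₀
    · obtain ⟨i⟩ := ‹Nonempty ι›
      simpa using sub_mem (sum_mem i j) (sum_mem i j₀)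

end Adjoin

theorem trdeg_adjoin_pairwise_sums_general {k : Type*} {K : Type u} [Field k] [Field K]
    [Algebra k K] {ι : Type v} {κ : Type w} [Nonempty ι] [Nonempty κ] (a : ι → K) (b : κ → K)
    (hab : AlgebraicIndependent k (Sum.elim a b)) :
    lift.{max v w} (trdeg k (IntermediateField.adjoin k
        (Set.range fun p : ι × κ => a p.1 + b p.2))) + 1 = lift.{u} #(ι ⊕ κ) := by
  obtain ⟨j₀⟩ := ‹Nonempty κ›
  rw [trdeg_eq_algebra_trdeg, adjoin_range_add_eq_adjoin_range_sumElim a b j₀,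
    ← lift_mk_eq_lift_trdeg_adjoin_range (algebraicIndependent_sumElim_add_sub hab j₀),
    ← mk_sum_subtype_ne_add_one j₀, lift_add, lift_one]

/-- If `a_1, …, a_m, b_1, …, b_n` (`m, n ≥ 1`) are algebraically independent over `k`,
then the subfield `k(a_i + b_j : i, j)` generated over `k` by the pairwise sums has
transcendence degree `m + n - 1` over `k`. -/
theorem trdeg_adjoin_pairwise_sums {k K : Type*} [Field k] [Field K] [Algebra k K]
    {m n : ℕ} (hm : 1 ≤ m) (hn : 1 ≤ n) (a : Fin m → K) (b : Fin n → K)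
    (hab : AlgebraicIndependent k (Sum.elim a b)) :
    trdeg k (IntermediateField.adjoin k
        (Set.range fun p : Fin m × Fin n => a p.1 + b p.2)) =
      ((m + n - 1 : ℕ) : Cardinal) := by
  have : Nonempty (Fin m) := ⟨⟨0, hm⟩⟩
  have : Nonempty (Fin n) := ⟨⟨0, hn⟩⟩
  rw [← add_one_inj, ← Nat.cast_add_one, Nat.sub_add_cancel (by lia)]
  simpa using trdeg_adjoin_pairwise_sums_general a b hab
end

section
/- Let K be a field, let C ⊆ K² be an infinite set, and let m be a natural number. Then there exist a natural number d ≥ 1 and a nonzero polynomial f ∈ K[X,Y] of total degree at most d such that the set C ∩ {p ∈ K² : f(p) = 0} has more than d·m elements. -/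
/-!
The monomials of degree at most `d` in two variables number `(d + 1)(d + 2) / 2`, and vanishing at
one point is one linear condition on the coefficients. Hence any `d * m + 1` points lie on a curve
of degree at most `d` as soon as `d * m + 1 < (d + 1)(d + 2) / 2`, which holds
for `d ≥ max 1 (2 * m)`.
-/

open Finset MvPolynomial

section MonomialCount

variable {σ : Type*} [DecidableEq σ]

/-- The exponents of the monomials of total degree at most `d` in the variables from `V`. Cutting
down to finitely many variables keeps this a `Finset` for every index type `σ`. -/
def exponentsOfDegreeLE (V : Finset σ) (d : ℕ) : Finset (σ →₀ ℕ) :=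
  (range (d + 1)).biUnion V.finsuppAntidiag

theorem degree_le_of_mem_exponentsOfDegreeLE {V : Finset σ} {d : ℕ} {a : σ →₀ ℕ}
    (ha : a ∈ exponentsOfDegreeLE V d) : a.degree ≤ d := by
  obtain ⟨k, hk, hak⟩ := mem_biUnion.1 ha
  obtain ⟨hsum, hsupp⟩ := mem_finsuppAntidiag.1 hak
  calc a.degree = V.sum a := sum_subset hsupp fun i _ hi => Finsupp.notMem_support_iff.1 hi
    _ = k := hsum
    _ ≤ d := mem_range_succ_iff.1 hk

theorem card_exponentsOfDegreeLE (V : Finset σ) (d : ℕ) :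
    #(exponentsOfDegreeLE V d) = (d + #V).choose #V := by
  have disjoint_degrees :
      Set.PairwiseDisjoint ↑(range (d + 1)) (V.finsuppAntidiag : ℕ → Finset (σ →₀ ℕ)) :=
    fun k _ l _ hkl => disjoint_left.2 fun a hk hl =>
      hkl ((mem_finsuppAntidiag.1 hk).1.symm.trans (mem_finsuppAntidiag.1 hl).1)
  rw [exponentsOfDegreeLE, card_biUnion disjoint_degrees]
  simp only [card_finsuppAntidiag_nat_eq_multichoose, Nat.sum_range_multichoose]

end MonomialCount

section Interpolation

variable {σ R : Type*} [CommRing R] [Nontrivial R]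

theorem exists_ne_zero_support_subset_forall_eval_eq_zero (E : Finset (σ →₀ ℕ))
    (T : Finset (σ → R)) (hTE : #T < #E) :
    ∃ f : MvPolynomial σ R, f ≠ 0 ∧ f.support ⊆ E ∧ ∀ p ∈ T, eval p f = 0 := by
  let evalOnT : restrictSupport R (E : Set (σ →₀ ℕ)) →ₗ[R] T → R :=
    LinearMap.pi fun p => (aeval p.1).toLinearMap ∘ₗ Submodule.subtype _
  have finrank_domain : Module.finrank R (restrictSupport R (E : Set (σ →₀ ℕ))) = #E := by
    simpa using Module.finrank_eq_card_basis (basisRestrictSupport R (E : Set (σ →₀ ℕ)))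
  have not_injective : ¬Function.Injective evalOnT := fun hinj => by
    have hle := LinearMap.finrank_le_finrank_of_injective hinj
    rw [finrank_domain, Module.finrank_fintype_fun_eq_card, Fintype.card_coe] at hle
    exact hTE.not_ge hle
  obtain ⟨f, hf, hf0⟩ : ∃ f, evalOnT f = 0 ∧ f ≠ 0 := by
    simpa [injective_iff_map_eq_zero] using not_injective
  refine ⟨f, by simpa using hf0, mod_cast (mem_restrictSupport_iff R).1 f.2, fun p hp => ?_⟩
  exact congrFun hf ⟨p, hp⟩

theorem exists_ne_zero_totalDegree_le_forall_eval_eq_zero (V : Finset σ) (d : ℕ)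
    (T : Finset (σ → R)) (hT : #T < (d + #V).choose #V) :
    ∃ f : MvPolynomial σ R, f ≠ 0 ∧ f.totalDegree ≤ d ∧ ∀ p ∈ T, eval p f = 0 := by
  classical
  obtain ⟨f, hf0, hfE, hfT⟩ := exists_ne_zero_support_subset_forall_eval_eq_zero
    (exponentsOfDegreeLE V d) T (by rwa [card_exponentsOfDegreeLE])
  exact ⟨f, hf0, Finset.sup_le fun a ha => degree_le_of_mem_exponentsOfDegreeLE (hfE ha), hfT⟩

end Interpolation

theorem mul_add_one_lt_choose_two {d m : ℕ} (hd : 1 ≤ d) (hmd : 2 * m ≤ d) :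
    d * m + 1 < (d + 2).choose 2 := by
  have choose_mul_two : (d + 2).choose 2 * 2 = (d + 2) * (d + 1) := by
    simpa using (Nat.add_one_mul_choose_eq (d + 1) 1).symm
  have two_mul_le_sq : d * (2 * m) ≤ d * d := Nat.mul_le_mul_left d hmd
  linarith

theorem exists_curve_with_many_intersections_general {σ R : Type*} [Nontrivial σ] [CommRing R]
    [Nontrivial R] {d m : ℕ} (hd : 1 ≤ d) (hmd : 2 * m ≤ d) {C : Set (σ → R)}
    (hC : ↑(d * m) < C.encard) :
    ∃ f : MvPolynomial σ R, f ≠ 0 ∧ f.totalDegree ≤ d ∧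
      ∃ T : Finset (σ → R), ↑T ⊆ C ∩ {p | eval p f = 0} ∧ d * m < #T := by
  classical
  obtain ⟨T, hTC, hT⟩ : ∃ T : Finset (σ → R), ↑T ⊆ C ∧ #T = d * m + 1 := by
    obtain ⟨t, htC, ht⟩ := Set.exists_subset_encard_eq (Order.add_one_le_of_lt hC)
    have htfin : t.Finite := Set.finite_of_encard_eq_coe (k := d * m + 1) (mod_cast ht)
    refine ⟨htfin.toFinset, by simpa using htC, ?_⟩
    exact_mod_cast htfin.encard_eq_coe_toFinset_card.symm.trans ht
  obtain ⟨i, j, hij⟩ := exists_pair_ne σ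
  obtain ⟨f, hf0, hfd, hfT⟩ := exists_ne_zero_totalDegree_le_forall_eval_eq_zero {i, j} d T
    (by rw [hT, card_pair hij]; exact mul_add_one_lt_choose_two hd hmd)
  exact ⟨f, hf0, hfd, T, fun p hp => ⟨hTC hp, hfT p hp⟩, by lia⟩

/-- Counting step in the proof of Theorem 3: for an infinite set `C ⊆ K²` and any
`m : ℕ`, there are a degree `d ≥ 1` and a nonzero polynomial `f ∈ K[X,Y]` of total
degree at most `d` whose zero set meets `C` in more than `d * m` points. -/
theorem exists_curve_with_many_intersections {K : Type*} [Field K]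
    (C : Set (Fin 2 → K)) (hC : C.Infinite) (m : ℕ) :
    ∃ d : ℕ, 1 ≤ d ∧ ∃ f : MvPolynomial (Fin 2) K, f ≠ 0 ∧ f.totalDegree ≤ d ∧
      ∃ T : Finset (Fin 2 → K),
        ↑T ⊆ C ∩ {p : Fin 2 → K | MvPolynomial.eval p f = 0} ∧ d * m < T.card :=
  ⟨2 * m + 1, by lia, exists_curve_with_many_intersections_general (by lia) (by lia)
    (hC.encard_eq.symm ▸ ENat.natCast_lt_top _)⟩
end

section
/- Let K be an algebraically closed field, let (τ_n) be a Zariski geometry on K such that every Zariski-closed subset of K^n is τ_n-closed, and let C ⊆ K² be a τ_2-closed irreducible set of dimension 1. Then there exist a natural number m and a nonempty Zariski-open set U ⊆ K² such that for every (a,b) ∈ U the set C ∩ {(x,y) ∈ K² : y = a·x + b} is finite with exactly m elements. (This m is called the degree of the curve C.) -/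
open Topology

/-- The dimension of a subset `S` of a topological space: the topological Krull
dimension of `S` with the subspace topology (the maximal length of a chain of
irreducible closed subsets). -/
noncomputable def setKrullDim {X : Type*} (t : TopologicalSpace X) (S : Set X) : WithBot ℕ∞ :=
  @topologicalKrullDim S (t.induced Subtype.val)

/-- `T` is an irreducible component of `S` (w.r.t. the topology `t`) if `T` is a maximal
irreducible subset of `S`. -/
def IsIrredComponentOf {X : Type*} (t : TopologicalSpace X) (T S : Set X) : Prop :=
  Maximal (fun T => T ⊆ S ∧ @IsIrreducible X t T) T

/-- A *Zariski geometry* on a set `X`: a Noetherian topology on each Cartesian power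
`X^n` satisfying axioms (Z0)-(Z3). -/
structure ZariskiGeometry (X : Type*) where
  τ : ∀ n : ℕ, TopologicalSpace (Fin n → X)
  noetherian : ∀ n, @TopologicalSpace.NoetherianSpace (Fin n → X) (τ n)
  /-- (Z0): every map `X^n → X^m` each of whose coordinates is a constant or a
  coordinate projection is continuous. -/
  Z0_cont : ∀ (n m : ℕ) (g : Fin m → (Fin n ⊕ X)),
    Continuous[τ n, τ m] (fun x i => Sum.elim (fun j => x j) id (g i))
  /-- (Z0): the diagonals are closed. -/
  Z0_diag : ∀ (n : ℕ) (i j : Fin n), IsClosed[τ n] {x | x i = x j}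
  /-- (Z1): for a (nonempty) closed `C ⊆ X^n` and a coordinate projection
  `π : X^n → X^k`, there is a proper closed subset `F` of `cl(π C)` with
  `cl(π C) \ F ⊆ π C`. -/
  Z1 : ∀ (n k : ℕ) (h : k ≤ n) (C : Set (Fin n → X)), IsClosed[τ n] C → C.Nonempty →
    ∃ F : Set (Fin k → X), IsClosed[τ k] F ∧
      F ⊂ closure[τ k] ((fun x => x ∘ Fin.castLE h) '' C) ∧
      closure[τ k] ((fun x => x ∘ Fin.castLE h) '' C) \ F ⊆ (fun x => x ∘ Fin.castLE h) '' C
  /-- (Z2): `X` is irreducible. -/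
  Z2_irred : @IrreducibleSpace (Fin 1 → X) (τ 1)
  /-- (Z2): uniform one-dimensionality. -/
  Z2 : ∀ (n : ℕ) (C : Set (Fin (n + 1) → X)), IsClosed[τ (n + 1)] C →
    ∃ m : ℕ, ∀ a : Fin n → X, {b : X | Fin.snoc a b ∈ C} = Set.univ ∨
      ({b : X | Fin.snoc a b ∈ C}.Finite ∧ {b : X | Fin.snoc a b ∈ C}.ncard ≤ m)
  /-- (Z3) (Dimension theorem): every irreducible component of the intersection of a
  closed irreducible `U ⊆ X^n` with a diagonal has dimension `≥ dim U - 1`. -/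
  Z3 : ∀ (n : ℕ) (U : Set (Fin n → X)) (i j : Fin n), IsClosed[τ n] U →
    @IsIrreducible _ (τ n) U →
    ∀ T : Set (Fin n → X), IsIrredComponentOf (τ n) T (U ∩ {x | x i = x j}) →
      setKrullDim (τ n) U ≤ setKrullDim (τ n) T + 1

/-!
If `C` is a vertical line then `m = 1`. Otherwise fix a slope `a` that is neither asymptotic to `C`
nor tangent to it at infinitely many points, where tangency is defined by limits of secants. Let `P`
be the product of the equations of `d` lines of slope `a` that meet `C` only at points of
non-tangency, and let `h` be a polynomial of degree at most `d` vanishing at all these points.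
If `w = P / h` took infinitely many values on `C`, the closure of its graph over the cone on `C`
would contain the `w`-axis, hence a two-dimensional component, and by (Z3) a point with `w = 0` away
from the vertex. Such a point cannot lie at infinity because `a` is not asymptotic, and at a finite
point it exhibits `a` as a limit of slopes of secants. So `P` is a constant multiple of `h` on `C`,
unless `h` vanishes on `C`.

By (Z2), the `d` lines meet `C` in `O(d)` points, so a polynomial of degree at most `d` vanishes on
`C` as soon as it satisfies `O(d)` linear conditions. The polynomials of degree at most `d` form a
space of quadratic dimension in `d`, hence `C` satisfies a polynomial equation, and irreducibility
makes its ideal principal, generated by some `f`. Sharpening the count shows that almost all lines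
of slope `a` meet `C` in `m = deg f` points. These are then all the zeros of `f` on the line, so
`V(f) \ C` is finite and the restriction of `f` to the generic line has nonzero discriminant. The
lines that avoid the zero set of this discriminant and the points of `V(f) \ C` meet `C` in `m`
points.
-/

open TopologicalSpace

namespace ZariskiGeometry

section Dimension

variable {X Y Z : Type*} [TopologicalSpace X] [TopologicalSpace Y] [TopologicalSpace Z]

/-- `U` is closed and irreducible of dimension at least `k`: it is the top of a strictly descending
chain `U ⊃ U₁ ⊃ ⋯ ⊃ U_k` of closed irreducible sets. -/
def IrredDimGE : ℕ → Set X → Prop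
  | 0, U => IsIrreducible U ∧ IsClosed U
  | k + 1, U => (IsIrreducible U ∧ IsClosed U) ∧ ∃ V, V ⊂ U ∧ IrredDimGE k V

namespace IrredDimGE

variable {k : ℕ} {U V : Set X}

theorem isIrreducible_and_isClosed (h : IrredDimGE k U) : IsIrreducible U ∧ IsClosed U := by
  cases k with
  | zero => exact h
  | succ k => exact h.1

theorem isIrreducible (h : IrredDimGE k U) : IsIrreducible U := h.isIrreducible_and_isClosed.1

theorem isClosed (h : IrredDimGE k U) : IsClosed U := h.isIrreducible_and_isClosed.2

theorem nonempty (h : IrredDimGE k U) : U.Nonempty := h.isIrreducible.nonempty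

theorem of_succ (h : IrredDimGE (k + 1) U) : IrredDimGE k U := by
  induction k generalizing U with
  | zero => exact h.1
  | succ k ih =>
    obtain ⟨hU, V, hVU, hV⟩ := h
    exact ⟨hU, V, hVU, ih hV⟩

theorem succ_of_ssubset (hV : IrredDimGE k V) (hVU : V ⊂ U) (hU : IsIrreducible U)
    (hcl : IsClosed U) : IrredDimGE (k + 1) U :=
  ⟨⟨hU, hcl⟩, V, hVU, hV⟩

theorem closure_image {f : X → Y} (hf : Continuous f) (hU : IrredDimGE k U)
    (hmem : ∀ V ⊆ U, IsClosed V → ∀ u ∈ U, f u ∈ closure (f '' V) → u ∈ V) :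
    IrredDimGE k (closure (f '' U)) := by
  have himage {V : Set X} (hV : IsIrreducible V) :
      IsIrreducible (closure (f '' V)) ∧ IsClosed (closure (f '' V)) :=
    ⟨(hV.image f hf.continuousOn).closure, isClosed_closure⟩
  induction k generalizing U with
  | zero => exact himage hU.1
  | succ k ih =>
    obtain ⟨⟨hirr, -⟩, V, hVU, hV⟩ := hU
    refine ⟨himage hirr, closure (f '' V),
      ⟨closure_mono (Set.image_mono hVU.subset), fun hle => ?_⟩,
      ih hV fun W hW hWcl v hv => hmem W (hW.trans hVU.subset) hWcl v (hVU.subset hv)⟩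
    exact hVU.2 fun u hu => hmem V hVU.subset hV.isClosed u hu
      (hle (subset_closure (Set.mem_image_of_mem f hu)))

theorem image {f : X → Y} {g : Y → X} (hf : Continuous f) (hg : Continuous g)
    (hfix : IsClosed {y | f (g y) = y}) (hgf : Set.LeftInvOn g f U) (hU : IrredDimGE k U) :
    IrredDimGE k (f '' U) := by
  have himage : f '' U = g ⁻¹' U ∩ {y | f (g y) = y} := by
    ext y
    constructor
    · rintro ⟨u, hu, rfl⟩
      exact ⟨by rwa [Set.mem_preimage, hgf hu], congrArg f (hgf hu)⟩
    · rintro ⟨hy, hfy⟩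
      exact ⟨g y, hy, hfy⟩
  have hcl : IsClosed (f '' U) := himage ▸ (hU.isClosed.preimage hg).inter hfix
  rw [← hcl.closure_eq]
  refine hU.closure_image hf fun V hVU hV u hu hfu => ?_
  have hgfV : g '' (f '' V) = V := (hgf.mono hVU).image_image
  rw [← hV.closure_eq, ← hgf hu, ← hgfV]
  exact image_closure_subset_closure_image hg (Set.mem_image_of_mem g hfu)

theorem singleton [T1Space X] (x : X) : IrredDimGE 0 {x} :=
  ⟨isIrreducible_singleton, isClosed_singleton⟩

theorem one_of_infinite [T1Space X] (hinf : U.Infinite) (hU : IsIrreducible U)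
    (hcl : IsClosed U) : IrredDimGE 1 U := by
  obtain ⟨x, hx⟩ := hinf.nonempty
  refine (singleton x).succ_of_ssubset ⟨Set.singleton_subset_iff.2 hx, fun h => ?_⟩ hU hcl
  exact hinf ((Set.finite_singleton x).subset h)

theorem infinite [T1Space X] (h : IrredDimGE 1 U) : U.Infinite := by
  intro hfin
  obtain ⟨⟨hirr, -⟩, V, hVU, hV⟩ := h
  obtain ⟨x, hx⟩ := hV.nonempty
  obtain ⟨y, hyU, hyV⟩ := Set.exists_of_ssubset hVU
  have hcover : U ⊆ {y} ∪ U \ {y} := fun z hz => by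
    by_cases hzy : z = y <;> simp [hzy, hz]
  rcases isPreirreducible_iff_isClosed_union_isClosed.1 hirr.isPreirreducible _ _
    isClosed_singleton hfin.sdiff.isClosed hcover with hsub | hsub
  · exact hyV (hsub (hVU.subset hx) ▸ hx)
  · exact (hsub hyU).2 rfl

end IrredDimGE

theorem irredDimGE_coe_iff_le_height {k : ℕ} (U : IrreducibleCloseds X) :
    IrredDimGE k (U : Set X) ↔ (k : ℕ∞) ≤ Order.height U := by
  induction k generalizing U with
  | zero => simpa using ⟨U.isIrreducible, U.isClosed⟩
  | succ k ih =>
    constructor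
    · rintro ⟨-, V, hVU, hV⟩
      let V' : IrreducibleCloseds X := ⟨V, hV.isIrreducible, hV.isClosed⟩
      calc ((k + 1 : ℕ) : ℕ∞) ≤ Order.height V' + 1 := by push_cast; gcongr; exact (ih V').1 hV
        _ ≤ Order.height U := Order.height_add_one_le hVU
    · intro h
      obtain ⟨p, rfl, hlen⟩ := Order.exists_series_of_le_height U h
      refine ⟨⟨p.last.isIrreducible, p.last.isClosed⟩, p.eraseLast.last,
        p.eraseLast_last_rel_last (by omega), (ih _).2 ?_⟩
      exact le_trans (by simp [hlen]) (Order.length_le_height_last (p := p.eraseLast))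

theorem isIrreducible_preimage_val {U W : Set X} (hWU : W ⊆ U) (hW : IsIrreducible W) :
    IsIrreducible (Subtype.val ⁻¹' W : Set U) := by
  constructor
  · obtain ⟨x, hx⟩ := hW.nonempty
    exact ⟨⟨x, hWU hx⟩, hx⟩
  · rintro _ _ ⟨O₁, hO₁, rfl⟩ ⟨O₂, hO₂, rfl⟩ ⟨x, hx, hx₁⟩ ⟨y, hy, hy₂⟩
    obtain ⟨z, hz, hz₁₂⟩ := hW.isPreirreducible O₁ O₂ hO₁ hO₂ ⟨x, hx, hx₁⟩ ⟨y, hy, hy₂⟩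
    exact ⟨⟨z, hWU hz⟩, hz, hz₁₂⟩

/-- The closed irreducible subsets of the subspace `U` are the closed irreducible sets below `U`,
for `U` closed and irreducible. -/
def irreducibleClosedsOrderIsoIic (U : IrreducibleCloseds X) :
    IrreducibleCloseds (U : Set X) ≃o Set.Iic U where
  toFun V := ⟨⟨Subtype.val '' (V : Set (U : Set X)),
    V.isIrreducible.image _ continuous_subtype_val.continuousOn,
    U.isClosed.isClosedMap_subtype_val _ V.isClosed⟩, Subtype.coe_image_subset _ _⟩
  invFun W := ⟨Subtype.val ⁻¹' (W.1 : Set X), isIrreducible_preimage_val W.2 W.1.isIrreducible,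
    W.1.isClosed.preimage continuous_subtype_val⟩
  left_inv _ := IrreducibleCloseds.ext (Set.preimage_image_eq _ Subtype.val_injective)
  right_inv W := Subtype.ext <| IrreducibleCloseds.ext <|
    (Subtype.image_preimage_coe _ _).trans (Set.inter_eq_right.2 W.2)
  map_rel_iff' := Set.image_subset_image_iff Subtype.val_injective

theorem irredDimGE_iff_le_setKrullDim {k : ℕ} {U : Set X} (hU : IsIrreducible U)
    (hcl : IsClosed U) : IrredDimGE k U ↔ (k : WithBot ℕ∞) ≤ setKrullDim inferInstance U := by
  let U' : IrreducibleCloseds X := ⟨U, hU, hcl⟩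
  have hdim : setKrullDim inferInstance U = (Order.height U' : WithBot ℕ∞) := by
    rw [Order.height_eq_krullDim_Iic]
    exact Order.krullDim_eq_of_orderIso (irreducibleClosedsOrderIsoIic U')
  rw [hdim, show U = (U' : Set X) from rfl, irredDimGE_coe_iff_le_height]
  norm_cast

theorem isIrreducible_image2 {f : X → Y → Z} (hf₁ : ∀ x, Continuous (f x))
    (hf₂ : ∀ y, Continuous (f · y)) {S : Set X} {T : Set Y} (hS : IsIrreducible S)
    (hT : IsIrreducible T) : IsIrreducible (Set.image2 f S T) := by
  refine ⟨hS.nonempty.image2 hT.nonempty, ?_⟩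
  rintro O₁ O₂ hO₁ hO₂ ⟨_, ⟨s₁, hs₁, t₁, ht₁, rfl⟩, h₁⟩ ⟨_, ⟨s₂, hs₂, t₂, ht₂, rfl⟩, h₂⟩
  obtain ⟨s, hs, hst₁, hst₂⟩ := hS.isPreirreducible _ _ (hO₁.preimage (hf₂ t₁))
    (hO₂.preimage (hf₂ t₂)) ⟨s₁, hs₁, h₁⟩ ⟨s₂, hs₂, h₂⟩
  obtain ⟨t, ht, hst⟩ := hT.isPreirreducible _ _ (hO₁.preimage (hf₁ s)) (hO₂.preimage (hf₁ s))
    ⟨t₁, ht₁, hst₁⟩ ⟨t₂, ht₂, hst₂⟩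
  exact ⟨_, ⟨s, hs, t, ht, rfl⟩, hst⟩

theorem exists_subset_of_subset_sUnion {B : Set X} (hB : IsIrreducible B) {S : Set (Set X)}
    (hS : S.Finite) (hcl : ∀ A ∈ S, IsClosed A) (hsub : B ⊆ ⋃₀ S) : ∃ A ∈ S, B ⊆ A := by
  simpa using isIrreducible_iff_sUnion_isClosed.1 hB hS.toFinset (by simpa using hcl)
    (by simpa using hsub)

/-- `H` has local codimension at most `m`: for every closed irreducible `U`, through every point of
`U ∩ H` there passes a closed irreducible subset of `U ∩ H` whose dimension is at least
`dim U - m`. -/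
def HasCodimLE (m : ℕ) (H : Set X) : Prop :=
  ∀ ⦃k : ℕ⦄ ⦃U : Set X⦄, IrredDimGE (k + m) U → ∀ u ∈ U ∩ H,
    ∃ T, IrredDimGE k T ∧ u ∈ T ∧ T ⊆ U ∩ H

namespace HasCodimLE

variable {l m : ℕ} {H H' : Set X}

theorem inter (hH : HasCodimLE m H) (hH' : HasCodimLE l H') : HasCodimLE (l + m) (H ∩ H') := by
  rintro k U hU u ⟨huU, huH, huH'⟩
  obtain ⟨T, hT, huT, hTU⟩ := hH (k := k + l) (by rwa [add_assoc]) u ⟨huU, huH⟩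
  obtain ⟨T', hT', huT', hTT'⟩ := hH' hT u ⟨huT, huH'⟩
  exact ⟨T', hT', huT', fun x hx =>
    ⟨(hTU (hTT' hx).1).1, (hTU (hTT' hx).1).2, (hTT' hx).2⟩⟩

theorem biInter {α : Type*} {H : α → Set X} (s : Finset α) (hH : ∀ i ∈ s, HasCodimLE 1 (H i)) :
    HasCodimLE s.card (⋂ i ∈ s, H i) := by
  classical
  induction s using Finset.induction_on with
  | empty => exact fun k U hU u hu => ⟨U, hU, hu.1, by simp⟩
  | insert i s hi ih =>
    rw [Finset.card_insert_of_notMem hi, Finset.set_biInter_insert]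
    exact (hH i (by simp)).inter (ih fun j hj => hH j (by simp [hj]))

theorem preimage {f : X → Y} {g : Y → X} (hf : Continuous f) (hg : Continuous g)
    (hfix : IsClosed {y | f (g y) = y}) (hgf : Function.LeftInverse g f) {H : Set Y}
    (hH : HasCodimLE m H) : HasCodimLE m (f ⁻¹' H) := by
  rintro k U hU u ⟨huU, huH⟩
  obtain ⟨T, hT, hfuT, hTU⟩ := hH (hU.image hf hg hfix fun x _ => hgf x) (f u)
    ⟨Set.mem_image_of_mem f huU, huH⟩
  have hfg : Set.LeftInvOn f g T := fun y hy => by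
    obtain ⟨x, -, rfl⟩ := (hTU hy).1
    rw [hgf x]
  refine ⟨g '' T, hT.image hg hf (by simp [hgf _]) hfg, ⟨f u, hfuT, hgf u⟩, ?_⟩
  rintro _ ⟨y, hy, rfl⟩
  obtain ⟨⟨x, hx, rfl⟩, hxH⟩ := hTU hy
  exact ⟨by rwa [hgf x], by rwa [Set.mem_preimage, hgf x]⟩

end HasCodimLE

variable [NoetherianSpace X]

theorem exists_isIrredComponentOf {A : Set X} (hA : IsClosed A) {x : X} (hx : x ∈ A) :
    ∃ T, IsIrredComponentOf inferInstance T A ∧ x ∈ T ∧ IsClosed T := by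
  obtain ⟨S, hfin, hcl, hirr, rfl⟩ := NoetherianSpace.exists_finite_set_isClosed_irreducible hA
  obtain ⟨T₀, hT₀, hxT₀⟩ := hx
  obtain ⟨T, hT₀T, ⟨hTS, hTmax⟩⟩ := hfin.exists_le_maximal hT₀
  refine ⟨T, ⟨⟨Set.subset_sUnion_of_mem hTS, hirr T hTS⟩, ?_⟩, hT₀T hxT₀, hcl T hTS⟩
  rintro T' ⟨hT'S, hT'⟩ hTT'
  obtain ⟨T'', hT'', hsub⟩ := exists_subset_of_subset_sUnion hT' hfin hcl hT'S
  exact hsub.trans (hTmax hT'' (hTT'.trans hsub))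

theorem exists_irredDimGE_succ_of_subset_closure {k : ℕ} {A B Y : Set X} (hA : IsClosed A)
    (hB : IrredDimGE k B) (hBY : B ⊆ closure Y)
    (hY : ∀ y ∈ Y, ∃ R, IsIrreducible R ∧ y ∈ R ∧ R ⊆ A ∧ ¬R ⊆ B) :
    ∃ A', IrredDimGE (k + 1) A' ∧ B ⊂ A' ∧ A' ⊆ A := by
  obtain ⟨S, hfin, hcl, hirr, rfl⟩ := NoetherianSpace.exists_finite_set_isClosed_irreducible hA
  have hfin' : {T ∈ S | ¬T ⊆ B}.Finite := hfin.subset (Set.sep_subset _ _)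
  have hYS : Y ⊆ ⋃₀ {T ∈ S | ¬T ⊆ B} := fun y hy => by
    obtain ⟨R, hR, hyR, hRA, hRB⟩ := hY y hy
    obtain ⟨T, hT, hRT⟩ := exists_subset_of_subset_sUnion hR hfin hcl hRA
    exact ⟨T, ⟨hT, fun hTB => hRB (hRT.trans hTB)⟩, hRT hyR⟩
  have hScl : IsClosed (⋃₀ {T ∈ S | ¬T ⊆ B}) := by
    rw [Set.sUnion_eq_biUnion]
    exact hfin'.isClosed_biUnion fun T hT => hcl T hT.1
  have hBS : B ⊆ ⋃₀ {T ∈ S | ¬T ⊆ B} := hBY.trans (closure_minimal hYS hScl)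
  obtain ⟨T, ⟨hTS, hTB⟩, hBT⟩ :=
    exists_subset_of_subset_sUnion hB.isIrreducible hfin' (fun T hT => hcl T hT.1) hBS
  exact ⟨T, hB.succ_of_ssubset ⟨hBT, hTB⟩ (hirr T hTS) (hcl T hTS), ⟨hBT, hTB⟩,
    Set.subset_sUnion_of_mem hTS⟩

theorem exists_irredDimGE_succ_of_disjoint {k : ℕ} {B G : Set X} (hB : IrredDimGE k B)
    (hBG : B ⊆ closure G) (hdisj : Disjoint G B) :
    ∃ A, IrredDimGE (k + 1) A ∧ B ⊂ A ∧ A ⊆ closure G :=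
  exists_irredDimGE_succ_of_subset_closure isClosed_closure hB hBG fun y hy =>
    ⟨{y}, isIrreducible_singleton, rfl, Set.singleton_subset_iff.2 (subset_closure hy),
      fun h => hdisj.notMem_of_mem_left hy (h rfl)⟩

theorem finite_setOf_not_mem_irredDimGE_one [T1Space X] {A : Set X} (hA : IsClosed A) :
    {x ∈ A | ¬∃ R, IrredDimGE 1 R ∧ x ∈ R ∧ R ⊆ A}.Finite := by
  obtain ⟨S, hfin, hcl, hirr, rfl⟩ := NoetherianSpace.exists_finite_set_isClosed_irreducible hA
  have hfin' : (⋃₀ {T ∈ S | T.Finite}).Finite :=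
    (hfin.subset (Set.sep_subset _ _)).sUnion fun T hT => hT.2
  refine hfin'.subset ?_
  rintro x ⟨⟨T, hT, hxT⟩, hx⟩
  refine ⟨T, ⟨hT, by_contra fun hinf => hx ?_⟩, hxT⟩
  exact ⟨T, .one_of_infinite hinf (hirr T hT) (hcl T hT), hxT, Set.subset_sUnion_of_mem hT⟩

end Dimension

section PolynomialFunctions

variable {σ τ K : Type*} [Field K]

/-- `p` is a polynomial function on `K^σ`. -/
@[fun_prop]
def IsPoly (p : (σ → K) → K) : Prop :=
  ∃ f : MvPolynomial σ K, ∀ x, MvPolynomial.eval x f = p x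

theorem isPoly_eval (f : MvPolynomial σ K) : IsPoly (fun x => MvPolynomial.eval x f) :=
  ⟨f, fun _ => rfl⟩

namespace IsPoly

variable {p q : (σ → K) → K}

@[fun_prop]
theorem const (c : K) : IsPoly (fun _ : σ → K => c) := ⟨MvPolynomial.C c, by simp⟩

@[fun_prop]
theorem apply (i : σ) : IsPoly (fun x : σ → K => x i) := ⟨MvPolynomial.X i, by simp⟩

@[fun_prop]
theorem add (hp : IsPoly p) (hq : IsPoly q) : IsPoly (fun x => p x + q x) := by
  obtain ⟨f, hf⟩ := hp
  obtain ⟨g, hg⟩ := hq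
  exact ⟨f + g, by simp [hf, hg]⟩

@[fun_prop]
theorem sub (hp : IsPoly p) (hq : IsPoly q) : IsPoly (fun x => p x - q x) := by
  obtain ⟨f, hf⟩ := hp
  obtain ⟨g, hg⟩ := hq
  exact ⟨f - g, by simp [hf, hg]⟩

@[fun_prop]
theorem mul (hp : IsPoly p) (hq : IsPoly q) : IsPoly (fun x => p x * q x) := by
  obtain ⟨f, hf⟩ := hp
  obtain ⟨g, hg⟩ := hq
  exact ⟨f * g, by simp [hf, hg]⟩

theorem prod {α : Type*} (s : Finset α) {p : α → (σ → K) → K} (hp : ∀ a, IsPoly (p a)) :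
    IsPoly (fun x => ∏ a ∈ s, p a x) := by
  choose f hf using hp
  exact ⟨∏ a ∈ s, f a, by simp [hf]⟩

theorem comp (hp : IsPoly p) {φ : (τ → K) → σ → K} (hφ : ∀ i, IsPoly fun x => φ x i) :
    IsPoly (fun x => p (φ x)) := by
  obtain ⟨f, hf⟩ := hp
  choose g hg using hφ
  refine ⟨MvPolynomial.bind₁ g f, fun x => ?_⟩
  have hgx : (fun i => MvPolynomial.eval x (g i)) = φ x := funext fun i => hg i x
  simp only [← hf, ← hgx]
  exact MvPolynomial.eval₂Hom_bind₁ (RingHom.id K) x g f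

end IsPoly

end PolynomialFunctions

section Tuples

variable {K : Type*} {n m : ℕ}

theorem setOf_snoc_init_eq (c : K) :
    {y : Fin (n + 1) → K | Fin.snoc (Fin.init y) c = y} = {y | y (Fin.last n) = c} := by
  ext y
  refine ⟨fun h => by rw [Set.mem_ofPred_eq, ← h, Fin.snoc_last], ?_⟩
  rintro rfl
  exact Fin.snoc_init_self y

theorem image2_append_eq (F : Set (Fin n → K)) (B : Set (Fin m → K)) :
    Set.image2 Fin.append F B =
      {z | (fun i => z (Fin.castAdd m i)) ∈ F ∧ (fun j => z (Fin.natAdd n j)) ∈ B} := by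
  ext z
  constructor
  · rintro ⟨x, hx, y, hy, rfl⟩
    simpa using ⟨hx, hy⟩
  · rintro ⟨hx, hy⟩
    exact ⟨_, hx, _, hy, Fin.append_castAdd_natAdd⟩

theorem vec_eta_two {α : Type*} (p : Fin 2 → α) : ![p 0, p 1] = p := FinVec.etaExpand_eq p

theorem snoc_zero_zero {α : Type*} [Zero α] {n : ℕ} : (Fin.snoc 0 0 : Fin (n + 1) → α) = 0 :=
  funext <| Fin.lastCases (by simp) fun i => by simp

end Tuples

section Geometry

/-- A field `K` with a Zariski geometry whose topologies refine the Zariski topologies. It is a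
class so that every `K^n` carries its topology by type class inference. -/
class ZariskiField (K : Type*) [Field K] where
  geometry : ZariskiGeometry K
  isClosed_of_zariskiClosedSet (n : ℕ) (C : Set (Fin n → K)) :
    ZariskiClosedSet K C → IsClosed[geometry.τ n] C

variable {K : Type*} [Field K] [ZariskiField K] {n m : ℕ}

instance : TopologicalSpace (Fin n → K) := ZariskiField.geometry.τ n

instance : NoetherianSpace (Fin n → K) := ZariskiField.geometry.noetherian n

instance : IrreducibleSpace (Fin 1 → K) := ZariskiField.geometry.Z2_irred

theorem IsPoly.isClosed_eq {p q : (Fin n → K) → K} (hp : IsPoly p) (hq : IsPoly q) :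
    IsClosed {x | p x = q x} := by
  obtain ⟨f, hf⟩ := hp.sub hq
  refine ZariskiField.isClosed_of_zariskiClosedSet n _ ⟨{f}, ?_⟩
  simp [hf, sub_eq_zero]

theorem isClosed_setOf_polyMap_eq {φ ψ : (Fin n → K) → Fin m → K} (hφ : ∀ i, IsPoly fun x => φ x i)
    (hψ : ∀ i, IsPoly fun x => ψ x i) : IsClosed {x | φ x = ψ x} := by
  simp only [funext_iff, Set.ofPred_forall]
  exact isClosed_iInter fun i => (hφ i).isClosed_eq (hψ i)

instance : T1Space (Fin n → K) :=
  ⟨fun u => isClosed_setOf_polyMap_eq (φ := id) (ψ := fun _ => u) .apply fun _ => .const _⟩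

theorem continuous_of_forall_apply_eq {φ : (Fin n → K) → Fin m → K}
    (hφ : ∀ k, (∃ i, ∀ x, φ x k = x i) ∨ ∃ c, ∀ x, φ x k = c) : Continuous φ := by
  have hsum (k : Fin m) : ∃ g : Fin n ⊕ K, ∀ x, φ x k = Sum.elim (fun j => x j) id g := by
    rcases hφ k with ⟨i, hi⟩ | ⟨c, hc⟩
    · exact ⟨.inl i, hi⟩
    · exact ⟨.inr c, hc⟩
  choose g hg using hsum
  rw [show φ = _ from funext fun x => funext fun k => hg k x]
  exact ZariskiField.geometry.Z0_cont n m g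

theorem continuous_reindex (e : Fin m → Fin n) : Continuous fun (x : Fin n → K) j => x (e j) :=
  continuous_of_forall_apply_eq fun j => .inl ⟨e j, fun _ => rfl⟩

theorem continuous_init : Continuous (Fin.init : (Fin (n + 1) → K) → Fin n → K) :=
  continuous_reindex Fin.castSucc

theorem continuous_snoc_const (c : K) :
    Continuous fun x : Fin n → K => (Fin.snoc x c : Fin (n + 1) → K) :=
  continuous_of_forall_apply_eq <| Fin.lastCases (.inr ⟨c, fun _ => Fin.snoc_last ..⟩)
    fun i => .inl ⟨i, fun _ => Fin.snoc_castSucc ..⟩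

theorem continuous_append_const (y : Fin m → K) :
    Continuous fun x : Fin n → K => Fin.append x y :=
  continuous_of_forall_apply_eq <| Fin.addCases (fun i => .inl ⟨i, fun _ => Fin.append_left ..⟩)
    fun j => .inr ⟨y j, fun _ => Fin.append_right ..⟩

theorem continuous_append_left (x : Fin n → K) :
    Continuous fun y : Fin m → K => Fin.append x y :=
  continuous_of_forall_apply_eq <| Fin.addCases
    (fun i => .inr ⟨x i, fun _ => Fin.append_left ..⟩)
    fun j => .inl ⟨j, fun _ => Fin.append_right ..⟩

theorem hasCodimLE_apply_eq_apply (i j : Fin n) : HasCodimLE 1 {x : Fin n → K | x i = x j} := by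
  rintro k U hU u hu
  obtain ⟨T, hT, huT, hTcl⟩ := exists_isIrredComponentOf
    (hU.isClosed.inter ((IsPoly.apply i).isClosed_eq (.apply j))) hu
  have hZ3 := (irredDimGE_iff_le_setKrullDim hU.isIrreducible hU.isClosed).1 hU |>.trans
    (ZariskiField.geometry.Z3 n U i j hU.isClosed hU.isIrreducible T hT)
  refine ⟨T, (irredDimGE_iff_le_setKrullDim hT.1.2 hTcl).2 ?_, huT, hT.1.1⟩
  have hcancel (d : WithBot ℕ∞) (h : ((k + 1 : ℕ) : WithBot ℕ∞) ≤ d + 1) :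
      (k : WithBot ℕ∞) ≤ d := by
    cases d with
    | bot => simp at h
    | coe d =>
      norm_cast at h ⊢
      push_cast at h
      exact (ENat.add_le_add_iff_right (by simp)).1 h
  exact hcancel _ hZ3

theorem hasCodimLE_apply_eq_const (i : Fin n) (c : K) : HasCodimLE 1 {x : Fin n → K | x i = c} := by
  have hdiag := hasCodimLE_apply_eq_apply (K := K) i.castSucc (Fin.last n)
  convert hdiag.preimage (continuous_snoc_const c) continuous_init ?_
    (Fin.init_snoc (α := fun _ => K) c) using 1
  · ext x
    simp
  · rw [setOf_snoc_init_eq]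
    exact (IsPoly.apply _).isClosed_eq (.const c)

theorem IrredDimGE.exists_fibre {k : ℕ} {U : Set (Fin n → K)} (s : Finset (Fin n))
    (hU : IrredDimGE (k + s.card) U) {u : Fin n → K} (hu : u ∈ U) :
    ∃ T, IrredDimGE k T ∧ u ∈ T ∧ T ⊆ {x ∈ U | ∀ i ∈ s, x i = u i} := by
  obtain ⟨T, hT, huT, hTU⟩ := HasCodimLE.biInter s
    (fun i _ => hasCodimLE_apply_eq_const i (u i)) hU u ⟨hu, by simp⟩
  exact ⟨T, hT, huT, fun x hx => ⟨(hTU hx).1, by simpa using (hTU hx).2⟩⟩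

theorem not_irredDimGE_succ (U : Set (Fin n → K)) : ¬IrredDimGE (n + 1) U := by
  intro hU
  obtain ⟨u, hu⟩ := hU.nonempty
  obtain ⟨T, hT, -, hTU⟩ := IrredDimGE.exists_fibre (k := 1) Finset.univ
    (by simpa [add_comm] using hU) hu
  exact hT.infinite ((Set.finite_singleton u).subset fun x hx =>
    funext fun i => (hTU hx).2 i (Finset.mem_univ i))

theorem IrredDimGE.image2_append {k l : ℕ} {F : Set (Fin n → K)} {B : Set (Fin m → K)}
    (hF : IrredDimGE k F) (hB : IrredDimGE l B) :
    IrredDimGE (k + l) (Set.image2 Fin.append F B) := by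
  have hirr {F : Set (Fin n → K)} {B : Set (Fin m → K)} (hF : IsIrreducible F ∧ IsClosed F)
      (hB : IsIrreducible B ∧ IsClosed B) :
      IsIrreducible (Set.image2 Fin.append F B) ∧ IsClosed (Set.image2 Fin.append F B) := by
    refine ⟨isIrreducible_image2 continuous_append_left continuous_append_const hF.1 hB.1, ?_⟩
    rw [image2_append_eq]
    exact (hF.2.preimage (continuous_reindex _)).inter (hB.2.preimage (continuous_reindex _))
  have hmem (F : Set (Fin n → K)) (B : Set (Fin m → K)) (x y) :
      Fin.append x y ∈ Set.image2 Fin.append F B ↔ x ∈ F ∧ y ∈ B := by simp [image2_append_eq]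
  induction k generalizing F with
  | zero =>
    rw [zero_add]
    obtain ⟨x, hx⟩ := hF.nonempty
    induction l generalizing B with
    | zero => exact hirr hF hB
    | succ l ih =>
      obtain ⟨hBic, V, hVB, hV⟩ := hB
      obtain ⟨y, hyB, hyV⟩ := Set.exists_of_ssubset hVB
      exact ⟨hirr hF hBic, _, ⟨Set.image2_subset_left hVB.subset, fun h =>
        hyV ((hmem F V x y).1 (h ((hmem F B x y).2 ⟨hx, hyB⟩))).2⟩, ih hV⟩
  | succ k ih =>
    rw [add_right_comm]
    obtain ⟨hFic, V, hVF, hV⟩ := hF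
    obtain ⟨x, hxF, hxV⟩ := Set.exists_of_ssubset hVF
    obtain ⟨y, hy⟩ := hB.nonempty
    exact ⟨hirr hFic hB.isIrreducible_and_isClosed, _, ⟨Set.image2_subset_right hVF.subset,
      fun h => hxV ((hmem V B x y).1 (h ((hmem F B x y).2 ⟨hxF, hy⟩))).1⟩, ih hV⟩

theorem irredDimGE_univ : IrredDimGE n (Set.univ : Set (Fin n → K)) := by
  induction n with
  | zero =>
    rw [Set.eq_singleton_iff_unique_mem.2 ⟨Set.mem_univ 0, fun x _ => Subsingleton.elim x 0⟩]
    exact .singleton _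
  | succ n ih =>
    have hline : IrredDimGE 1 (Set.univ : Set (Fin 1 → K)) :=
      (IrredDimGE.singleton 0).succ_of_ssubset
        (Set.ssubset_univ_iff.2 (Set.ne_univ_iff_exists_notMem _ |>.2 ⟨1, by simp⟩))
        (IrreducibleSpace.isIrreducible_univ _) isClosed_univ
    simpa [image2_append_eq] using ih.image2_append hline

instance : IrreducibleSpace (Fin n → K) :=
  (irreducibleSpace_def _).2 irredDimGE_univ.isIrreducible

variable (K) in
theorem infinite_of_zariskiField : Infinite K := by
  rw [← (Equiv.funUnique (Fin 1) K).infinite_iff]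
  exact Set.infinite_univ_iff.1 irredDimGE_univ.infinite

theorem eq_univ_or_finite_setOf_line {φ : (Fin 1 → K) → Fin n → K} (hφ : Continuous φ)
    {D : Set (Fin n → K)} (hD : IsClosed D) :
    {b : K | φ ![b] ∈ D} = Set.univ ∨ {b : K | φ ![b] ∈ D}.Finite := by
  obtain ⟨m, hm⟩ := ZariskiField.geometry.Z2 0 _ (hD.preimage hφ)
  simpa using (hm 0).imp_right And.left

end Geometry

section LevelCurve

variable {K : Type*} [Field K] {n : ℕ}

/-- The level curve through `u` of `x_n - p(x_0, …, x_{n-1})` along which only the coordinates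
`x_i` and `x_n` vary. -/
def levelCurve (p : (Fin n → K) → K) (i : Fin n) (u : Fin (n + 1) → K) : Set (Fin (n + 1) → K) :=
  {v | (∀ j ≠ i, v j.castSucc = u j.castSucc) ∧
    v (Fin.last n) - p (Fin.init v) = u (Fin.last n) - p (Fin.init u)}

theorem levelCurve_eq_of_mem {p : (Fin n → K) → K} {i : Fin n} {u v : Fin (n + 1) → K}
    (hv : v ∈ levelCurve p i u) : levelCurve p i v = levelCurve p i u := by
  ext w
  simp only [levelCurve, Set.mem_ofPred_eq, hv.2]
  exact and_congr_left' (forall₂_congr fun j hj => by rw [hv.1 j hj])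

end LevelCurve

section PolynomialContinuity

variable {K : Type*} [Field K] [ZariskiField K] {n m : ℕ}

theorem hasCodimLE_reindex_preimage (e : Fin n → Fin m) {k d : ℕ} (hkd : k + d = n)
    {F : Set (Fin n → K)} (hF : IrredDimGE k F) :
    HasCodimLE d ((fun (z : Fin m → K) i => z (e i)) ⁻¹' F) := by
  rintro j U hU u ⟨huU, huF⟩
  let graphMap : (Fin m → K) → Fin (n + m) → K := fun z => Fin.append (fun i => z (e i)) z
  let snd : (Fin (n + m) → K) → Fin m → K := fun z i => z (Fin.natAdd n i)
  have hgraph : Continuous graphMap := continuous_of_forall_apply_eq <| Fin.addCases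
    (fun i => .inl ⟨e i, fun _ => Fin.append_left ..⟩)
    fun i => .inl ⟨i, fun _ => Fin.append_right ..⟩
  have hprod : IrredDimGE (j + n) (Set.image2 Fin.append F U) := by
    simpa only [← hkd, add_left_comm] using hF.image2_append hU
  have hdiag := HasCodimLE.biInter Finset.univ fun i _ =>
    hasCodimLE_apply_eq_apply (K := K) (Fin.castAdd m i) (Fin.natAdd n (e i))
  rw [Finset.card_fin] at hdiag
  obtain ⟨T, hT, huT, hTsub⟩ := hdiag hprod (graphMap u) ⟨⟨_, huF, _, huU, rfl⟩, by simp [graphMap]⟩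
  have hleft : Set.LeftInvOn graphMap snd T := fun z hz => by
    have hz' := (hTsub hz).2
    simp only [Finset.mem_univ, Set.iInter_true, Set.mem_iInter, Set.mem_ofPred_eq] at hz'
    ext i
    refine Fin.addCases (fun i => ?_) (fun i => ?_) i <;> simp [graphMap, snd, hz']
  refine ⟨snd '' T, hT.image (continuous_reindex _) hgraph (by simp [graphMap, snd]) hleft,
    ⟨_, huT, by simp [graphMap, snd]⟩, ?_⟩
  rintro _ ⟨z, hz, rfl⟩
  have hz' := (hTsub hz).1
  rw [← hleft hz, image2_append_eq] at hz'
  simpa [graphMap] using hz'.symm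

theorem exists_irredDimGE_one_of_dense {Q : Set (Fin (n + n) → K)} (hQ : IsClosed Q)
    (hdense : Dense {u | ∃ R, IrredDimGE 1 R ∧ u ∈ R ∧ ∀ v ∈ R, Fin.append u v ∈ Q})
    (u : Fin n → K) : ∃ R, IrredDimGE 1 R ∧ u ∈ R ∧ ∀ v ∈ R, Fin.append u v ∈ Q := by
  let diag : (Fin n → K) → Fin (n + n) → K := fun u => Fin.append u u
  let fst : (Fin (n + n) → K) → Fin n → K := fun z i => z (Fin.castAdd n i)
  let snd : (Fin (n + n) → K) → Fin n → K := fun z i => z (Fin.natAdd n i)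
  have hdiag : Continuous diag := continuous_of_forall_apply_eq <| Fin.addCases
    (fun i => .inl ⟨i, fun _ => Fin.append_left ..⟩) fun i => .inl ⟨i, fun _ => Fin.append_right ..⟩
  have hfix : IsClosed {z | diag (fst z) = z} :=
    isClosed_setOf_polyMap_eq (Fin.addCases
      (fun i => by simpa only [diag, Fin.append_left] using .apply _)
      fun i => by simpa only [diag, Fin.append_right] using .apply _) .apply
  have hΔ : IrredDimGE n (diag '' Set.univ) :=
    irredDimGE_univ.image hdiag (continuous_reindex _) hfix fun u _ => by simp [diag]
  obtain ⟨A, hA, hΔA, hAQ⟩ := exists_irredDimGE_succ_of_subset_closure hQ hΔ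
    ((Set.image_mono hdense.closure_eq.ge).trans (image_closure_subset_closure_image hdiag)) <| by
      rintro _ ⟨v, ⟨R, hR, hvR, hRQ⟩, rfl⟩
      refine ⟨Fin.append v '' R, hR.isIrreducible.image _ (continuous_append_left v).continuousOn,
        ⟨v, hvR, rfl⟩, Set.image_subset_iff.2 hRQ, fun hsub => ?_⟩
      refine hR.infinite ((Set.finite_singleton v).subset fun w hw => ?_)
      obtain ⟨w', -, hw'⟩ := hsub ⟨w, hw, rfl⟩
      obtain ⟨hw₁, hw₂⟩ : w' = v ∧ w' = w :=
        Prod.mk.inj ((Fin.appendEquiv (α := K) n n).injective (a₁ := (w', w')) (a₂ := (v, w)) hw')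
      exact hw₂.symm.trans hw₁
  obtain ⟨T, hT, huT, hTA⟩ := IrredDimGE.exists_fibre (k := 1) (Finset.univ.map (Fin.castAddEmb n))
    (by simpa [add_comm] using hA) (hΔA.subset ⟨u, trivial, rfl⟩)
  have hleft : Set.LeftInvOn (Fin.append u) snd T := fun z hz => by
    ext i
    refine Fin.addCases (fun i => ?_) (fun i => ?_) i
    · simpa [diag] using ((hTA hz).2 (Fin.castAdd n i) (by simp)).symm
    · exact Fin.append_right ..
  have hright (v : Fin n → K) : snd (Fin.append u v) = v := funext fun _ => Fin.append_right ..
  refine ⟨snd '' T, hT.image (continuous_reindex _) (continuous_append_left u) (by simp [hright])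
    hleft, ⟨_, huT, hright u⟩, ?_⟩
  rintro _ ⟨z, hz, rfl⟩
  rw [hleft hz]
  exact hAQ (hTA hz).1

theorem eq_univ_of_forall_finite_translate {D : Set (Fin 2 → K)} (hD : IsClosed D) (g : K → K)
    (hg : ∀ c, {s | ![s, c + g s] ∉ D}.Finite) : D = Set.univ := by
  classical
  have : Infinite K := infinite_of_zariskiField K
  obtain ⟨m, hm⟩ := ZariskiField.geometry.Z2 1 D hD
  have hsnoc (s y : K) : (Fin.snoc ![s] y : Fin 2 → K) = ![s, y] := by
    ext i; fin_cases i <;> rfl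
  obtain ⟨cs, hcs⟩ := Infinite.exists_subset_card_eq K (m + 1)
  have hbad : (⋃ c ∈ cs, {s | ![s, c + g s] ∉ D}).Finite :=
    cs.finite_toSet.biUnion fun c _ => hg c
  have hvertical (s : K) (hs : s ∉ ⋃ c ∈ cs, {s | ![s, c + g s] ∉ D}) (y : K) : ![s, y] ∈ D := by
    simp only [Set.mem_iUnion, Set.mem_ofPred_eq, not_exists, not_not] at hs
    have hms := hm ![s]
    simp only [hsnoc] at hms
    rcases hms with huniv | ⟨hfin, hcard⟩
    · exact huniv.ge trivial
    · have hsub : ((cs.image (· + g s) : Finset K) : Set K) ⊆ {b | ![s, b] ∈ D} := by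
        intro b hb
        obtain ⟨c, hc, rfl⟩ := Finset.mem_image.1 hb
        exact hs c hc
      have hle := Set.ncard_le_ncard hsub hfin
      rw [Set.ncard_coe_finset, Finset.card_image_of_injective _ (add_left_injective _), hcs] at hle
      omega
  refine Set.eq_univ_of_forall fun z => ?_
  have hcont : Continuous fun x : Fin 1 → K => ![x 0, z 1] :=
    continuous_of_forall_apply_eq fun k => by
      fin_cases k
      exacts [.inl ⟨0, fun _ => rfl⟩, .inr ⟨z 1, fun _ => rfl⟩]
  rcases eq_univ_or_finite_setOf_line hcont hD with huniv | hfin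
  · exact vec_eta_two z ▸ huniv.ge (Set.mem_univ (z 0))
  · exact absurd (hfin.subset fun s hs => hvertical s hs (z 1)) hbad.infinite_compl

theorem isClosed_setOf_mem_levelCurve {p : (Fin n → K) → K} (hp : IsPoly p) (i : Fin n)
    {φ ψ : (Fin m → K) → Fin (n + 1) → K} (hφ : ∀ k, IsPoly fun z => φ z k)
    (hψ : ∀ k, IsPoly fun z => ψ z k) : IsClosed {z | ψ z ∈ levelCurve p i (φ z)} := by
  have hset : {z | ψ z ∈ levelCurve p i (φ z)} =
      (⋂ j, ⋂ (_ : j ≠ i), {z | ψ z j.castSucc = φ z j.castSucc}) ∩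
        {z | ψ z (Fin.last n) - p (Fin.init (ψ z)) = φ z (Fin.last n) - p (Fin.init (φ z))} := by
    ext
    simp [levelCurve]
  rw [hset]
  refine .inter (isClosed_iInter fun j => isClosed_iInter fun _ => (hψ _).isClosed_eq (hφ _)) ?_
  exact ((hψ _).sub (hp.comp fun j => hψ j.castSucc)).isClosed_eq
    ((hφ _).sub (hp.comp fun j => hφ j.castSucc))

theorem exists_irredDimGE_one_subset_levelCurve {p : (Fin n → K) → K} (hp : IsPoly p) (i : Fin n)
    (u : Fin (n + 1) → K) : ∃ R, IrredDimGE 1 R ∧ u ∈ R ∧ R ⊆ levelCurve p i u := by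
  let Q : Set (Fin ((n + 1) + (n + 1)) → K) := {z |
    (fun k => z (Fin.natAdd (n + 1) k)) ∈ levelCurve p i fun k => z (Fin.castAdd (n + 1) k)}
  have hQ : IsClosed Q := isClosed_setOf_mem_levelCurve hp i (fun _ => .apply _) fun _ => .apply _
  have hmemQ (u v : Fin (n + 1) → K) : Fin.append u v ∈ Q ↔ v ∈ levelCurve p i u := by
    simp [Q, -Fin.natAdd_eq_addNat]
  let Y : Set (Fin (n + 1) → K) := {u | ∃ R, IrredDimGE 1 R ∧ u ∈ R ∧ R ⊆ levelCurve p i u}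
  suffices hY : Dense Y by
    have hcurves := exists_irredDimGE_one_of_dense hQ
    simp only [hmemQ] at hcurves
    exact hcurves hY u
  intro w
  let plane : (Fin 2 → K) → Fin (n + 1) → K := fun x =>
    Fin.snoc (Function.update (Fin.init w) i (x 0)) (x 1)
  have hplane : Continuous plane := continuous_of_forall_apply_eq <| Fin.lastCases
    (.inl ⟨1, fun _ => Fin.snoc_last ..⟩) fun j => by
      by_cases hj : j = i
      · exact .inl ⟨0, fun x => by simp [plane, hj]⟩
      · exact .inr ⟨w j.castSucc, fun x => by simp [plane, hj, Fin.init]⟩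
  suffices huniv : plane ⁻¹' closure Y = Set.univ by
    have hw : plane ![w i.castSucc, w (Fin.last n)] ∈ closure Y := huniv.ge trivial
    have hself : Function.update (Fin.init w) i (w i.castSucc) = Fin.init w :=
      Function.update_eq_self i (Fin.init w)
    simpa [plane, hself] using hw
  refine eq_univ_of_forall_finite_translate (isClosed_closure.preimage hplane)
    (fun s => p (Function.update (Fin.init w) i s)) fun c => ?_
  let wc : Fin (n + 1) → K := Fin.snoc (Fin.init w) (c + p (Fin.init w))
  let curve : K → Fin (n + 1) → K := fun s => plane ![s, c + p (Function.update (Fin.init w) i s)]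
  have hcurve (s : K) : curve s ∈ levelCurve p i wc :=
    ⟨fun j hj => by simp [curve, plane, wc, hj], by
      simp [curve, plane, wc, -Fin.snoc_update]⟩
  have hclosed : IsClosed (levelCurve p i wc) :=
    isClosed_setOf_mem_levelCurve hp i (fun _ => .const _) .apply
  refine .of_finite_image (f := curve) ((finite_setOf_not_mem_irredDimGE_one hclosed).subset ?_)
    fun s _ t _ hst => by simpa [curve, plane] using congrFun hst i.castSucc
  rintro _ ⟨s, hs, rfl⟩
  refine ⟨hcurve s, fun ⟨R, hR, hsR, hRsub⟩ => hs (subset_closure ⟨R, hR, hsR, ?_⟩)⟩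
  exact hRsub.trans (levelCurve_eq_of_mem (hcurve s)).ge

/-- Through every point of `A` there passes a closed irreducible subset of `A` of dimension at
least `k`. -/
def HasLocalDimGE {X : Type*} [TopologicalSpace X] (k : ℕ) (A : Set X) : Prop :=
  ∀ a ∈ A, ∃ B, IrredDimGE k B ∧ a ∈ B ∧ B ⊆ A

theorem hasLocalDimGE_of_injOn_init {Γ : Set (Fin (n + 1) → K)} (hΓ : IsClosed Γ)
    (hinj : Set.InjOn Fin.init Γ)
    (hdir : ∀ v ∈ Γ, ∀ i, ∃ R, IrredDimGE 1 R ∧ v ∈ R ∧ R ⊆ Γ ∧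
      ∀ u ∈ R, ∀ j ≠ i, u (Fin.castSucc j) = v j.castSucc) : HasLocalDimGE n Γ := by
  intro γ hγ
  suffices h : ∀ s : Finset (Fin n), ∃ B, IrredDimGE s.card B ∧ γ ∈ B ∧
      B ⊆ Γ ∩ {z | ∀ j ∉ s, z (Fin.castSucc j) = γ j.castSucc} by
    obtain ⟨B, hB, hγB, hBΓ⟩ := h Finset.univ
    exact ⟨B, by simpa using hB, hγB, fun z hz => (hBΓ hz).1⟩
  intro s
  induction s using Finset.induction_on with
  | empty => exact ⟨{γ}, .singleton γ, rfl, by simpa using hγ⟩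
  | insert i s his ih =>
    obtain ⟨B, hB, hγB, hBΓ⟩ := ih
    have hcl : IsClosed (Γ ∩ {z | ∀ j ∉ insert i s, z (Fin.castSucc j) = γ j.castSucc}) := by
      simp only [Set.ofPred_forall]
      exact hΓ.inter (isClosed_iInter fun j => isClosed_iInter fun _ =>
        (IsPoly.apply _).isClosed_eq (.const _))
    rw [Finset.card_insert_of_notMem his]
    obtain ⟨A, hA, hBA, hAΓ⟩ := exists_irredDimGE_succ_of_subset_closure hcl hB subset_closure <| by
      intro v hv
      obtain ⟨R, hR, hvR, hRΓ, hRi⟩ := hdir v (hBΓ hv).1 i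
      refine ⟨R, hR.isIrreducible, hvR, fun u hu => ⟨hRΓ hu, fun j hj => ?_⟩, fun hRB => ?_⟩
      · rw [Finset.mem_insert, not_or] at hj
        rw [hRi u hu j hj.1, (hBΓ hv).2 j hj.2]
      · refine hR.infinite ((Set.finite_singleton v).subset fun u hu => ?_)
        refine hinj (hRΓ hu) (hBΓ hv).1 (funext fun j => ?_)
        by_cases hj : j = i
        · exact hj ▸ ((hBΓ (hRB hu)).2 i his).trans ((hBΓ hv).2 i his).symm
        · exact hRi u hu j hj
    exact ⟨A, hA, hBA.subset hγB, hAΓ⟩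

theorem exists_irredDimGE_and_not_succ {F : Set (Fin n → K)} (hF : IsIrreducible F)
    (hcl : IsClosed F) : ∃ k, IrredDimGE k F ∧ ¬IrredDimGE (k + 1) F := by
  by_contra! hsucc
  have hall (k : ℕ) : IrredDimGE k F := by
    induction k with
    | zero => exact ⟨hF, hcl⟩
    | succ k ih => exact hsucc k ih
  exact not_irredDimGE_succ F (hall _)

theorem IrredDimGE.le {k : ℕ} {U : Set (Fin n → K)} (hU : IrredDimGE k U) : k ≤ n := by
  induction k with
  | zero => exact n.zero_le
  | succ k ih =>
    refine (ih hU.of_succ).lt_of_ne ?_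
    rintro rfl
    exact not_irredDimGE_succ U hU

end PolynomialContinuity

section Continuity

variable {K : Type*} [Field K] [ZariskiField K] {n m : ℕ}

theorem mem_of_init_mem_closure_of_isIrreducible {Γ E : Set (Fin (n + 1) → K)}
    (hinj : Set.InjOn Fin.init Γ) (hdim : HasLocalDimGE n Γ) (hE : IsClosed E) (hEΓ : E ⊆ Γ)
    (hEirr : IsIrreducible E)
    (hsmaller : ∀ V ⊆ Γ, IsClosed V → closure (Fin.init '' V) ⊂ closure (Fin.init '' E) →
      ∀ v ∈ Γ, Fin.init v ∈ closure (Fin.init '' V) → v ∈ V)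
    {γ : Fin (n + 1) → K} (hγ : γ ∈ Γ) (hγE : Fin.init γ ∈ closure (Fin.init '' E)) : γ ∈ E := by
  let F : Set (Fin n → K) := closure (Fin.init '' E)
  have hF : IsIrreducible F := (hEirr.image _ continuous_init.continuousOn).closure
  obtain ⟨G, hG, hGF, hGE⟩ := ZariskiField.geometry.Z1 (n + 1) n n.le_succ E hE hEirr.nonempty
  change G ⊂ F at hGF
  change F \ G ⊆ Fin.init '' E at hGE
  obtain ⟨k, hFk, hFk'⟩ := exists_irredDimGE_and_not_succ hF isClosed_closure
  obtain ⟨d, rfl⟩ := Nat.exists_eq_add_of_le hFk.le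
  obtain ⟨B, hB, hγB, hBΓ⟩ := hdim γ hγ
  obtain ⟨W, hW, hγW, hWBF⟩ := hasCodimLE_reindex_preimage Fin.castSucc rfl hFk hB γ ⟨hγB, hγE⟩
  have hWΓ : W ⊆ Γ := fun z hz => hBΓ (hWBF hz).1
  by_contra hγE'
  have hWEG : W ⊆ E ∪ Fin.init ⁻¹' G := fun z hz => by
    refine or_iff_not_imp_right.2 fun hzG => ?_
    obtain ⟨e, he, hez⟩ := hGE ⟨(hWBF hz).2, hzG⟩
    exact hinj (hEΓ he) (hWΓ hz) hez ▸ he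
  have hWG : W ⊆ Fin.init ⁻¹' G := (isPreirreducible_iff_isClosed_union_isClosed.1
    hW.isIrreducible.isPreirreducible E _ hE (hG.preimage continuous_init) hWEG).resolve_left
      fun hWE => hγE' (hWE hγW)
  have hclosureG {V : Set (Fin (k + d + 1) → K)} (hVW : V ⊆ W) : closure (Fin.init '' V) ⊂ F :=
    (closure_minimal (Set.image_subset_iff.2 (hVW.trans hWG)) hG).trans_ssubset hGF
  have hWk : IrredDimGE k (closure (Fin.init '' W)) :=
    hW.closure_image continuous_init fun V hVW hV w hw =>
      hsmaller V (hVW.trans hWΓ) hV (hclosureG hVW) w (hWΓ hw)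
  exact hFk' (hWk.succ_of_ssubset (hclosureG le_rfl) hF isClosed_closure)

theorem mem_of_init_mem_closure {Γ E : Set (Fin (n + 1) → K)} (hinj : Set.InjOn Fin.init Γ)
    (hdim : HasLocalDimGE n Γ) (hE : IsClosed E) (hEΓ : E ⊆ Γ) {γ : Fin (n + 1) → K} (hγ : γ ∈ Γ)
    (hγE : Fin.init γ ∈ closure (Fin.init '' E)) : γ ∈ E := by
  obtain ⟨F, hF⟩ : ∃ F : Closeds (Fin n → K), closure (Fin.init '' E) = F :=
    ⟨⟨_, isClosed_closure⟩, rfl⟩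
  induction F using WellFoundedLT.induction generalizing E γ with
  | ind F ih =>
  obtain ⟨S, hS, hcl, hirr, rfl⟩ := NoetherianSpace.exists_finite_set_isClosed_irreducible hE
  rw [Set.sUnion_eq_biUnion, Set.image_iUnion₂, hS.closure_biUnion] at hγE
  obtain ⟨T, hT, hγT⟩ := Set.mem_iUnion₂.1 hγE
  have hTF : closure (Fin.init '' T) ⊆ F :=
    hF ▸ closure_mono (Set.image_mono (Set.subset_sUnion_of_mem hT))
  refine ⟨T, hT, mem_of_init_mem_closure_of_isIrreducible hinj hdim (hcl T hT)
    ((Set.subset_sUnion_of_mem hT).trans hEΓ) (hirr T hT) (fun V hVΓ hV hVT v hv hvV => ?_) hγ hγT⟩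
  have hlt : (⟨closure (Fin.init '' V), isClosed_closure⟩ : Closeds (Fin n → K)) < F :=
    SetLike.coe_ssubset_coe.1 (hVT.trans_subset hTF)
  exact ih _ hlt hV hVΓ hv hvV rfl

theorem continuousOn_snoc_of_mem {Γ : Set (Fin (n + 1) → K)} (hΓ : IsClosed Γ)
    (hinj : Set.InjOn Fin.init Γ) (hdim : HasLocalDimGE n Γ) {S : Set (Fin n → K)}
    {g : (Fin n → K) → K} (hg : ∀ x ∈ S, Fin.snoc x (g x) ∈ Γ) :
    ContinuousOn (fun x => (Fin.snoc x (g x) : Fin (n + 1) → K)) S := by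
  refine continuousOn_iff_isClosed.2 fun D hD => ⟨closure ((fun x => Fin.snoc x (g x)) ⁻¹' D ∩ S),
    isClosed_closure, Set.Subset.antisymm ?_ ?_⟩
  · rintro x ⟨hxD, hxS⟩
    exact ⟨subset_closure ⟨hxD, hxS⟩, hxS⟩
  · rintro x ⟨hx, hxS⟩
    refine ⟨(mem_of_init_mem_closure hinj hdim (hD.inter hΓ) Set.inter_subset_right (hg x hxS)
      ?_).1, hxS⟩
    rw [Fin.init_snoc]
    refine closure_mono ?_ hx
    rintro y ⟨hyD, hyS⟩
    exact ⟨_, ⟨hyD, hg y hyS⟩, Fin.init_snoc ..⟩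

theorem IsPoly.continuous_snoc {p : (Fin n → K) → K} (hp : IsPoly p) :
    Continuous fun x => (Fin.snoc x (p x) : Fin (n + 1) → K) := by
  let Γ : Set (Fin (n + 1) → K) := {z | z (Fin.last n) - p (Fin.init z) = 0}
  have hΓ : IsClosed Γ := ((IsPoly.apply _).sub (hp.comp fun _ => .apply _)).isClosed_eq (.const 0)
  have hinj : Set.InjOn Fin.init Γ := fun v hv w hw hvw => by
    rw [← Fin.snoc_init_self v, ← Fin.snoc_init_self w, sub_eq_zero.1 hv, sub_eq_zero.1 hw, hvw]
  have hdim : HasLocalDimGE n Γ := hasLocalDimGE_of_injOn_init hΓ hinj fun v hv i => by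
    obtain ⟨R, hR, hvR, hRv⟩ := exists_irredDimGE_one_subset_levelCurve hp i v
    exact ⟨R, hR, hvR, fun u hu => (hRv hu).2.trans hv, fun u hu => (hRv hu).1⟩
  rw [← continuousOn_univ]
  exact continuousOn_snoc_of_mem hΓ hinj hdim fun x _ => by simp [Γ]

theorem continuous_of_forall_isPoly {φ : (Fin n → K) → Fin m → K}
    (hφ : ∀ i, IsPoly fun x => φ x i) : Continuous φ := by
  suffices happend : Continuous fun x => Fin.append x (φ x) by
    simpa [Function.comp_def] using (continuous_reindex (Fin.natAdd n)).comp happend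
  induction m with
  | zero => exact continuous_of_forall_apply_eq fun k =>
      Fin.addCases (fun i => .inl ⟨i, fun _ => Fin.append_left ..⟩) (fun j => j.elim0) k
  | succ m ih =>
    have hlast : IsPoly fun z : Fin (n + m) → K => φ (fun i => z (Fin.castAdd m i)) (Fin.last m) :=
      (hφ _).comp fun _ => .apply _
    have hsnoc (x : Fin n → K) :
        Fin.append x (φ x) = Fin.snoc (Fin.append x (Fin.init (φ x))) (φ x (Fin.last m)) := by
      rw [← Fin.append_snoc, Fin.snoc_init_self]
    simp only [hsnoc]
    simpa [Function.comp_def] using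
      hlast.continuous_snoc.comp (ih (φ := fun x => Fin.init (φ x)) fun i => hφ i.castSucc)

theorem IsPoly.hasCodimLE_eq {p q : (Fin n → K) → K} (hp : IsPoly p) (hq : IsPoly q) :
    HasCodimLE 1 {x | p x = q x} := by
  have hgraph (i : Fin (n + 2)) :
      IsPoly fun x =>
        (Fin.snoc (Fin.snoc x (p x) : Fin (n + 1) → K) (q x) : Fin (n + 2) → K) i := by
    refine Fin.lastCases ?_ (Fin.lastCases ?_ fun i => ?_) i <;>
      simp only [Fin.snoc_last, Fin.snoc_castSucc]
    exacts [hq, hp, .apply i]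
  convert (hasCodimLE_apply_eq_apply (Fin.last n).castSucc (Fin.last (n + 1))).preimage
    (continuous_of_forall_isPoly hgraph) (continuous_reindex fun i => i.castSucc.castSucc)
    (isClosed_setOf_polyMap_eq (fun i => (hgraph i).comp fun _ => .apply _) .apply)
    (fun x => by simp) using 1
  ext x
  simp

theorem continuousOn_snoc_inv (i : Fin n) :
    ContinuousOn (fun x => (Fin.snoc x (x i)⁻¹ : Fin (n + 1) → K)) {x | x i ≠ 0} := by
  have hpoly : IsPoly fun z : Fin (n + 1) → K => z (Fin.last n) * z i.castSucc := by fun_prop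
  refine continuousOn_snoc_of_mem (hpoly.isClosed_eq (.const 1)) (fun v hv w hw hvw => ?_)
    (fun γ hγ => ?_) fun x hx => by simpa using inv_mul_cancel₀ hx
  · rw [← Fin.snoc_init_self v, ← Fin.snoc_init_self w, eq_inv_of_mul_eq_one_left hv,
      eq_inv_of_mul_eq_one_left hw, hvw, show v i.castSucc = w i.castSucc from congrFun hvw i]
  · obtain ⟨B, hB, hγB, hBΓ⟩ := hpoly.hasCodimLE_eq (.const 1) irredDimGE_univ γ ⟨trivial, hγ⟩
    exact ⟨B, hB, hγB, fun z hz => (hBΓ hz).2⟩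

theorem continuousOn_of_forall_isPoly_div {φ : (Fin n → K) → Fin m → K} {q : (Fin n → K) → K}
    {p : Fin m → (Fin n → K) → K} (hp : ∀ i, IsPoly (p i)) (hq : IsPoly q)
    (hφ : ∀ x, q x ≠ 0 → ∀ i, φ x i = p i x / q x) : ContinuousOn φ {x | q x ≠ 0} := by
  have hmul : Continuous fun (z : Fin (n + 1 + 1) → K) i =>
      p i (fun j => z j.castSucc.castSucc) * z (Fin.last _) :=
    continuous_of_forall_isPoly fun i => ((hp i).comp fun _ => .apply _).mul (.apply _)
  have hcomp := hmul.comp_continuousOn ((continuousOn_snoc_inv (Fin.last n)).comp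
    hq.continuous_snoc.continuousOn (s := {x | q x ≠ 0}) fun x hx => by simpa using hx)
  refine hcomp.congr fun x hx => funext fun i => ?_
  simp [hφ x hx i, div_eq_mul_inv]

end Continuity

section Cone

variable {K : Type*} [Field K] {n : ℕ}

/-- The affine point with homogeneous coordinates `z`, where the last coordinate is the
homogenizing one. -/
def dehomogenize (z : Fin (n + 1) → K) : Fin n → K := fun i => z i.castSucc / z (Fin.last n)

/-- The cone over `C ⊆ K^n`: homogeneous coordinates of the points of `C`. The projective closure
of `C` is encoded by the closure of its cone. -/
def affineCone (C : Set (Fin n → K)) : Set (Fin (n + 1) → K) :=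
  {z | z (Fin.last n) ≠ 0 ∧ dehomogenize z ∈ C}

variable [ZariskiField K] {C : Set (Fin n → K)} {z : Fin (n + 1) → K}

theorem IrredDimGE.eq_univ {U : Set (Fin n → K)} (hU : IrredDimGE n U) : U = Set.univ :=
  by_contra fun hne => not_irredDimGE_succ _ <| hU.succ_of_ssubset (Set.ssubset_univ_iff.2 hne)
    (IrreducibleSpace.isIrreducible_univ _) isClosed_univ

theorem continuousOn_dehomogenize :
    ContinuousOn dehomogenize {z : Fin (n + 1) → K | z (Fin.last n) ≠ 0} :=
  continuousOn_of_forall_isPoly_div (fun i => .apply i.castSucc) (.apply _) fun _ _ _ => rfl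

theorem dehomogenize_mem_of_mem_closure (hC : IsClosed C) (hz : z ∈ closure (affineCone C))
    (hz₀ : z (Fin.last n) ≠ 0) : dehomogenize z ∈ C :=
  hC.closure_subset <| ((continuousOn_dehomogenize z hz₀).mono fun _ h => h.1).mem_closure hz
    fun _ h => h.2

theorem smul_mem_closure_affineCone (hz : z ∈ closure (affineCone C)) {t : K} (ht : t ≠ 0) :
    t • z ∈ closure (affineCone C) := by
  refine map_mem_closure (f := fun z => t • z)
    (continuous_of_forall_isPoly fun i => (IsPoly.const t).mul (.apply i)) hz ?_
  rintro y ⟨hy, hyC⟩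
  refine ⟨mul_ne_zero ht hy, ?_⟩
  have hsmul : dehomogenize (t • y) = dehomogenize y :=
    funext fun i => mul_div_mul_left _ _ ht
  rwa [hsmul]

theorem eq_univ_of_snoc_zero_mem_closure_affineCone (hC : IsClosed C)
    (hinf : ∀ p : Fin n → K, Fin.snoc p 0 ∈ closure (affineCone C)) : C = Set.univ := by
  let B : Set (Fin (n + 1) → K) := (fun p => Fin.snoc p 0) '' Set.univ
  have hB : IrredDimGE n B := irredDimGE_univ.image (continuous_snoc_const 0) continuous_init
    (by rw [setOf_snoc_init_eq]; exact (IsPoly.apply _).isClosed_eq (.const 0))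
    fun p _ => Fin.init_snoc ..
  have hdisj : Disjoint (affineCone C) B := Set.disjoint_left.2 <| by
    rintro _ ⟨hz, -⟩ ⟨p, -, rfl⟩
    simp at hz
  obtain ⟨A, hA, -, hAC⟩ := exists_irredDimGE_succ_of_disjoint hB
    (Set.image_subset_iff.2 fun p _ => hinf p) hdisj
  refine Set.eq_univ_of_forall fun p => ?_
  have hp := dehomogenize_mem_of_mem_closure (z := Fin.snoc p 1) hC
    (hAC (hA.eq_univ ▸ Set.mem_univ _)) (by simp)
  have hsnoc : dehomogenize (Fin.snoc p 1) = p := funext fun i => by simp [dehomogenize]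
  rwa [hsnoc] at hp

end Cone

section Slope

variable {K : Type*} [Field K]

/-- The line `y = a x + b`. -/
def line (a b : K) : Set (Fin 2 → K) := {p | p 1 = a * p 0 + b}

theorem mem_line {a b : K} {p : Fin 2 → K} : p ∈ line a b ↔ p 1 = a * p 0 + b := Iff.rfl

/-- Triples `(p, q, c)`, flattened to `K^5`, where `p, q ∈ C` have distinct abscissae and `c` is the
slope of the line `pq`. -/
def secantSet (C : Set (Fin 2 → K)) : Set (Fin 5 → K) :=
  {z | ![z 0, z 1] ∈ C ∧ ![z 2, z 3] ∈ C ∧ z 0 ≠ z 2 ∧ z 3 - z 1 = z 4 * (z 2 - z 0)}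

variable [ZariskiField K] {C : Set (Fin 2 → K)}

/-- A plane curve of the geometry: an irreducible closed subset of `K²` of dimension one. -/
structure IsCurve (C : Set (Fin 2 → K)) : Prop where
  irredDimGE_one : IrredDimGE 1 C
  not_irredDimGE_two : ¬IrredDimGE 2 C

/-- The line of slope `a` through `p` is a limit of secants of `C`. -/
def IsTangent (C : Set (Fin 2 → K)) (p : Fin 2 → K) (a : K) : Prop :=
  ![p 0, p 1, p 0, p 1, a] ∈ closure (secantSet C)

/-- The direction `a` is not asymptotic to `C`, is tangent to `C` at finitely many points only, and
the lines in this direction meet `C` in finitely many points. -/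
structure IsGenericSlope (C : Set (Fin 2 → K)) (a : K) : Prop where
  not_asymptotic : ![1, a, 0] ∉ closure (affineCone C)
  finite_isTangent : {p ∈ C | IsTangent C p a}.Finite
  finite_inter_line : ∀ b, (C ∩ line a b).Finite

theorem isClosed_line (a b : K) : IsClosed (line a b) :=
  (IsPoly.apply 1).isClosed_eq (((IsPoly.const a).mul (.apply 0)).add (.const b))

namespace IsCurve

theorem subset_or_finite_inter (hC : IsCurve C) {D : Set (Fin 2 → K)} (hD : IsClosed D) :
    C ⊆ D ∨ (C ∩ D).Finite := by
  refine or_iff_not_imp_left.2 fun hCD => (finite_setOf_not_mem_irredDimGE_one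
    (hC.irredDimGE_one.isClosed.inter hD)).subset fun x hx => ⟨hx, ?_⟩
  rintro ⟨R, hR, -, hRCD⟩
  exact hC.not_irredDimGE_two <| hR.succ_of_ssubset
    ⟨fun y hy => (hRCD hy).1, fun hCR => hCD fun y hy => (hRCD (hCR hy)).2⟩
    hC.irredDimGE_one.isIrreducible hC.irredDimGE_one.isClosed

theorem finite_setOf_asymptotic (hC : IsCurve C) :
    {a : K | ![1, a, 0] ∈ closure (affineCone C)}.Finite := by
  have hφ : Continuous fun b : Fin 1 → K => ![1, b 0, 0] :=
    continuous_of_forall_isPoly fun i => by fin_cases i <;> dsimp <;> fun_prop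
  refine (eq_univ_or_finite_setOf_line hφ isClosed_closure).resolve_left fun huniv => ?_
  have hopen : IsOpen {p : Fin 2 → K | p 0 ≠ 0} :=
    ((IsPoly.apply 0).isClosed_eq (.const 0)).isOpen_compl
  have hdense : Dense {p : Fin 2 → K | p 0 ≠ 0} := hopen.dense ⟨1, by simp⟩
  have hinf (p : Fin 2 → K) : Fin.snoc p 0 ∈ closure (affineCone C) := by
    refine isClosed_closure.closure_subset <| map_mem_closure (f := fun q => Fin.snoc q 0)
      (continuous_snoc_const 0) (hdense p) fun q hq => ?_
    have hslope : ![1, q 1 / q 0, 0] ∈ closure (affineCone C) := Set.eq_univ_iff_forall.1 huniv _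
    convert smul_mem_closure_affineCone hslope hq using 1
    ext i
    fin_cases i
    · simp [Fin.snoc]
    · simp [Fin.snoc, mul_div_cancel₀ _ hq]
    · simp [Fin.snoc]
  have hCuniv := eq_univ_of_snoc_zero_mem_closure_affineCone hC.irredDimGE_one.isClosed hinf
  exact hC.not_irredDimGE_two (hCuniv ▸ irredDimGE_univ)

end IsCurve

theorem closure_secantSet_subset (hC : IsClosed C) :
    closure (secantSet C) ⊆
      {z | ![z 0, z 1] ∈ C ∧ ![z 2, z 3] ∈ C ∧ z 3 - z 1 = z 4 * (z 2 - z 0)} := by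
  have hpair (i j : Fin 5) : Continuous fun z : Fin 5 → K => ![z i, z j] :=
    continuous_of_forall_isPoly fun k => by fin_cases k <;> exact .apply _
  have hslope : IsClosed {z : Fin 5 → K | z 3 - z 1 = z 4 * (z 2 - z 0)} :=
    IsPoly.isClosed_eq (by fun_prop) (by fun_prop)
  exact closure_minimal (fun z hz => ⟨hz.1, hz.2.1, hz.2.2.2⟩)
    ((hC.preimage (hpair 0 1)).inter ((hC.preimage (hpair 2 3)).inter hslope))

theorem not_irredDimGE_three_of_subset_closure_secantSet (hC : IsClosed C)
    (hvert : ∀ c, (C ∩ {p | p 0 = c}).Finite) {A : Set (Fin 5 → K)}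
    (hA : A ⊆ closure (secantSet C)) {z : Fin 5 → K} (hz : z ∈ A) (hz02 : z 0 ≠ z 2) :
    ¬IrredDimGE 3 A := by
  intro hA3
  obtain ⟨T, hT, -, hTA⟩ := IrredDimGE.exists_fibre (k := 1) {0, 2} (by simpa using hA3) hz
  have hmem {w : Fin 5 → K} (hw : w ∈ T) := closure_secantSet_subset hC (hA (hTA hw).1)
  have habsc {w : Fin 5 → K} (hw : w ∈ T) : w 0 = z 0 ∧ w 2 = z 2 := by
    simpa using (hTA hw).2
  refine hT.infinite (Set.Finite.of_finite_image (f := fun w => (![w 0, w 1], ![w 2, w 3]))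
    (((hvert (z 0)).prod (hvert (z 2))).subset ?_) ?_)
  · rintro _ ⟨w, hw, rfl⟩
    exact ⟨⟨(hmem hw).1, (habsc hw).1⟩, ⟨(hmem hw).2.1, (habsc hw).2⟩⟩
  · intro w hw v hv hwv
    simp only [Prod.mk.injEq, Matrix.vecCons_inj, and_true] at hwv
    obtain ⟨⟨h0, h1⟩, h2, h3⟩ := hwv
    have hne : v 2 - v 0 ≠ 0 := by
      rw [(habsc hv).1, (habsc hv).2]
      exact sub_ne_zero.2 hz02.symm
    have h4 : w 4 = v 4 := mul_right_cancel₀ hne <| by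
      rw [← (hmem hv).2.2, ← h0, ← h1, ← h2, ← h3, (hmem hw).2.2]
    ext i
    fin_cases i <;> assumption

namespace IsCurve

theorem exists_not_isTangent (hC : IsCurve C) (hvert : ∀ c, (C ∩ {p | p 0 = c}).Finite) :
    ∃ p ∈ C, ∃ a, ¬IsTangent C p a := by
  by_contra! htan
  let φ : (Fin (2 + 1) → K) → Fin 5 → K := fun w => ![w 0, w 1, w 0, w 1, w 2]
  let ψ : (Fin 5 → K) → Fin (2 + 1) → K := fun z => ![z 0, z 1, z 4]
  have hφ (i : Fin 5) : IsPoly fun w => φ w i := by fin_cases i <;> exact .apply _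
  have hψ (i : Fin (2 + 1)) : IsPoly fun z => ψ z i := by fin_cases i <;> exact .apply _
  let B : Set (Fin 5 → K) := φ '' Set.image2 Fin.append C Set.univ
  have hB : IrredDimGE 2 B :=
    (hC.irredDimGE_one.image2_append (irredDimGE_univ (n := 1))).image
      (continuous_of_forall_isPoly hφ) (continuous_of_forall_isPoly hψ)
      (isClosed_setOf_polyMap_eq (fun i => (hφ i).comp hψ) .apply)
      fun w _ => funext fun i => by fin_cases i <;> rfl
  have hBC : B ⊆ closure (secantSet C) := by
    rintro _ ⟨_, ⟨p, hp, c, -, rfl⟩, rfl⟩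
    exact htan p hp (c 0)
  have hdisj : Disjoint (secantSet C) B := Set.disjoint_left.2 <| by
    rintro _ ⟨-, -, hne, -⟩ ⟨w, -, rfl⟩
    exact hne rfl
  obtain ⟨A, hA, hBA, hAC⟩ := exists_irredDimGE_succ_of_disjoint hB hBC hdisj
  obtain ⟨z, hzA, hzB⟩ := Set.exists_of_ssubset hBA
  obtain ⟨hp, -, hslope⟩ := closure_secantSet_subset hC.irredDimGE_one.isClosed (hAC hzA)
  refine not_irredDimGE_three_of_subset_closure_secantSet hC.irredDimGE_one.isClosed hvert hAC hzA
    (fun h02 => hzB ⟨Fin.append ![z 0, z 1] ![z 4], ⟨_, hp, _, trivial, rfl⟩, ?_⟩) hA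
  have h13 : z 1 = z 3 := by
    linear_combination (z 4) * h02 - hslope
  ext i
  fin_cases i
  exacts [rfl, rfl, h02, h13, rfl]

theorem finite_setOf_forall_isTangent (hC : IsCurve C)
    (hvert : ∀ c, (C ∩ {p | p 0 = c}).Finite) : {a | ∀ p ∈ C, IsTangent C p a}.Finite := by
  obtain ⟨p, hp, a, hpa⟩ := hC.exists_not_isTangent hvert
  have hφ : Continuous fun b : Fin 1 → K => ![p 0, p 1, p 0, p 1, b 0] :=
    continuous_of_forall_isPoly fun i => by fin_cases i <;> dsimp <;> fun_prop
  exact ((eq_univ_or_finite_setOf_line hφ isClosed_closure).resolve_left fun huniv =>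
    hpa (Set.eq_univ_iff_forall.1 huniv a)).subset fun b hb => hb p hp

theorem isTangent_of_subset_line (hC : IsCurve C) (hvert : ∀ c, (C ∩ {p | p 0 = c}).Finite)
    {a b : K} (hCl : C ⊆ line a b) {p : Fin 2 → K} (hp : p ∈ C) : IsTangent C p a := by
  have hφ : Continuous fun q : Fin 2 → K => ![p 0, p 1, q 0, q 1, a] :=
    continuous_of_forall_isPoly fun i => by fin_cases i <;> dsimp <;> fun_prop
  have hsecant (q : Fin 2 → K) (hq : q ∈ C) (hqp : q 0 ≠ p 0) :
      ![p 0, p 1, q 0, q 1, a] ∈ secantSet C := by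
    refine ⟨?_, ?_, hqp.symm, ?_⟩
    · exact (vec_eta_two p).symm ▸ hp
    · exact (vec_eta_two q).symm ▸ hq
    · change q 1 - p 1 = a * (q 0 - p 0)
      linear_combination mem_line.1 (hCl hq) - mem_line.1 (hCl hp)
  rcases hC.subset_or_finite_inter (isClosed_closure.preimage hφ) with hsub | hfin
  · exact hsub hp
  · refine (hC.irredDimGE_one.infinite ((hfin.union (hvert (p 0))).subset fun q hq => ?_)).elim
    exact or_iff_not_imp_right.2 fun hqp =>
      ⟨hq, subset_closure (hsecant q hq fun h => hqp ⟨hq, h⟩)⟩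

theorem exists_isGenericSlope (hC : IsCurve C) (hvert : ∀ c, (C ∩ {p | p 0 = c}).Finite) :
    ∃ a, IsGenericSlope C a := by
  have := infinite_of_zariskiField K
  obtain ⟨a, ha⟩ :=
    (hC.finite_setOf_asymptotic.union (hC.finite_setOf_forall_isTangent hvert)).exists_notMem
  obtain ⟨hasymp, htan⟩ := not_or.1 ha
  have hφ : Continuous fun p : Fin 2 → K => ![p 0, p 1, p 0, p 1, a] :=
    continuous_of_forall_isPoly fun i => by fin_cases i <;> dsimp <;> fun_prop
  exact ⟨a, hasymp,
    (hC.subset_or_finite_inter (isClosed_closure.preimage hφ)).resolve_left htan,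
    fun b => (hC.subset_or_finite_inter (isClosed_line a b)).resolve_left fun hCl =>
      htan fun p hp => hC.isTangent_of_subset_line hvert hCl hp⟩

end IsCurve

end Slope

section Homogenization

variable {σ K : Type*} [Field K] {n : ℕ}

theorem exists_eval_sub_eval_eq_sum [Fintype σ] (f : MvPolynomial σ K) (p : σ → K) :
    ∃ g : σ → MvPolynomial σ K, ∀ q, MvPolynomial.eval q f - MvPolynomial.eval p f =
      ∑ i, MvPolynomial.eval q (g i) * (q i - p i) := by
  classical
  induction f using MvPolynomial.induction_on with
  | C c => exact ⟨0, by simp⟩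
  | add f f' hf hf' =>
    obtain ⟨g, hg⟩ := hf
    obtain ⟨g', hg'⟩ := hf'
    refine ⟨g + g', fun q => ?_⟩
    simp only [Pi.add_apply, map_add, add_mul, Finset.sum_add_distrib, ← hg, ← hg']
    ring
  | mul_X f i hf =>
    obtain ⟨g, hg⟩ := hf
    refine ⟨fun j => g j * MvPolynomial.X i +
      if j = i then MvPolynomial.C (MvPolynomial.eval p f) else 0, fun q => ?_⟩
    have hsum : ∑ j, MvPolynomial.eval q (g j) * q i * (q j - p j) =
        (MvPolynomial.eval q f - MvPolynomial.eval p f) * q i := by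
      rw [hg, Finset.sum_mul]
      exact Finset.sum_congr rfl fun j _ => by ring
    simp only [map_add, map_mul, MvPolynomial.eval_X, add_mul, Finset.sum_add_distrib, hsum,
      apply_ite (MvPolynomial.eval q), MvPolynomial.eval_C, map_zero, ite_mul, zero_mul,
      Finset.sum_ite_eq', Finset.mem_univ, if_true]
    ring

theorem exists_homogenization {f : MvPolynomial (Fin n) K} {d : ℕ} (hd : f.totalDegree ≤ d) :
    ∃ F : (Fin (n + 1) → K) → K, IsPoly F ∧ ∀ z, z (Fin.last n) ≠ 0 →
      F z = z (Fin.last n) ^ d * MvPolynomial.eval (dehomogenize z) f := by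
  refine ⟨_, isPoly_eval (∑ m ∈ f.support, MvPolynomial.C (f.coeff m) *
    ((∏ i, MvPolynomial.X i.castSucc ^ m i) * MvPolynomial.X (Fin.last n) ^ (d - ∑ i, m i))),
    fun z hz => ?_⟩
  rw [map_sum, MvPolynomial.eval_eq', Finset.mul_sum]
  refine Finset.sum_congr rfl fun m hm => ?_
  have hmd : ∑ i, m i ≤ d := by
    simpa [Finsupp.sum_fintype] using (MvPolynomial.le_totalDegree hm).trans hd
  have hpow : z (Fin.last n) ^ d = z (Fin.last n) ^ (d - ∑ i, m i) * ∏ i, z (Fin.last n) ^ m i := by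
    rw [Finset.prod_pow_eq_pow_sum, ← pow_add, Nat.sub_add_cancel hmd]
  have hprod : ∏ i, z i.castSucc ^ m i =
      (∏ i, z (Fin.last n) ^ m i) * ∏ i, dehomogenize z i ^ m i := by
    rw [← Finset.prod_mul_distrib]
    exact Finset.prod_congr rfl fun i _ => by
      rw [← mul_pow, dehomogenize, mul_div_cancel₀ _ hz]
  simp only [map_mul, map_prod, map_pow, MvPolynomial.eval_C, MvPolynomial.eval_X, hpow, hprod]
  ring

end Homogenization

section Ratio

variable {K : Type*} [Field K] {n : ℕ}

/-- The graph of `g` over `C`, the value being the last coordinate. -/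
def graphOver {K : Type*} (g : (Fin n → K) → K) (C : Set (Fin n → K)) : Set (Fin (n + 1) → K) :=
  {z | Fin.init z ∈ C ∧ z (Fin.last n) = g (Fin.init z)}

variable [ZariskiField K] {g : (Fin n → K) → K} {C : Set (Fin n → K)}

theorem snoc_dehomogenize_mem_closure_graphOver {z : Fin (n + 1 + 1) → K}
    (hz : z ∈ closure (graphOver (g ∘ dehomogenize) (affineCone C)))
    (hz₀ : Fin.init z (Fin.last n) ≠ 0) :
    Fin.snoc (dehomogenize (Fin.init z)) (z (Fin.last (n + 1))) ∈ closure (graphOver g C) := by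
  let φ : (Fin (n + 1 + 1) → K) → Fin (n + 1) → K :=
    fun z => Fin.snoc (dehomogenize (Fin.init z)) (z (Fin.last (n + 1)))
  have hφ : ContinuousOn φ {z | Fin.init z (Fin.last n) ≠ 0} := by
    refine continuousOn_of_forall_isPoly_div (q := fun z => Fin.init z (Fin.last n))
      (p := Fin.snoc (fun i z => z i.castSucc.castSucc)
        fun z => z (Fin.last (n + 1)) * z (Fin.last n).castSucc)
      (Fin.lastCases ?_ fun i => ?_) (.apply _) fun z hz => Fin.lastCases ?_ fun i => ?_
    · simpa using (IsPoly.apply _).mul (IsPoly.apply (Fin.last n).castSucc)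
    · simpa using .apply _
    · simpa [φ, Fin.init] using (mul_div_cancel_right₀ _ hz).symm
    · simp [φ, dehomogenize, Fin.init]
  refine ((hφ z hz₀).mono fun _ hw => hw.1.1).mem_closure hz fun w hw => ⟨?_, ?_⟩
  · simpa [φ] using hw.1.2
  · simpa [φ] using hw.2

theorem snoc_zero_mem_closure_graphOver_affineCone {p : Fin n → K} (hp : p ∈ C) :
    Fin.snoc 0 (g p) ∈ closure (graphOver (g ∘ dehomogenize) (affineCone C)) := by
  let φ : (Fin 1 → K) → Fin (n + 1 + 1) → K :=
    fun t => Fin.snoc (Fin.snoc (fun i => t 0 * p i) (t 0) : Fin (n + 1) → K) (g p)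
  have hφ : Continuous φ := by
    refine continuous_of_forall_isPoly <| Fin.lastCases ?_ <| Fin.lastCases ?_ fun i => ?_
    · simpa [φ] using IsPoly.const _
    · simpa [φ] using IsPoly.apply _
    · simpa [φ] using (IsPoly.apply _).mul (.const _)
  have hmem (t : K) (ht : t ≠ 0) : φ ![t] ∈ graphOver (g ∘ dehomogenize) (affineCone C) := by
    have hdehom : dehomogenize (Fin.init (φ ![t])) = p := by
      ext i
      simp [φ, dehomogenize, ht]
    exact ⟨⟨by simpa [φ] using ht, hdehom.symm ▸ hp⟩, by
      rw [Function.comp_apply, hdehom]; simp [φ]⟩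
  have huniv :
      {t : K | φ ![t] ∈ closure (graphOver (g ∘ dehomogenize) (affineCone C))} = Set.univ :=
    (eq_univ_or_finite_setOf_line hφ isClosed_closure).resolve_right fun hfin => by
      have := infinite_of_zariskiField K
      exact (Set.finite_singleton 0).infinite_compl
        (hfin.subset fun t ht => subset_closure (hmem t ht))
  convert Set.eq_univ_iff_forall.1 huniv 0 using 1
  simp [φ, ← Pi.zero_def, snoc_zero_zero]

-- The axis `{0} × K` lies in the closure, which therefore has a two-dimensional component.
theorem exists_mem_closure_graphOver_affineCone_last_eq_zero (hinf : (g '' C).Infinite) :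
    ∃ z ∈ closure (graphOver (g ∘ dehomogenize) (affineCone C)),
      z (Fin.last (n + 1)) = 0 ∧ z ≠ 0 := by
  let φ : (Fin 1 → K) → Fin (n + 1 + 1) → K := fun b => Fin.snoc 0 (b 0)
  have hφ (i) : IsPoly fun b => φ b i := by
    refine Fin.lastCases ?_ (fun i => ?_) i <;>
      simp only [φ, Fin.snoc_last, Fin.snoc_castSucc, Pi.zero_apply] <;> fun_prop
  have haxis :
      {w : K | φ ![w] ∈ closure (graphOver (g ∘ dehomogenize) (affineCone C))} = Set.univ :=
    (eq_univ_or_finite_setOf_line (continuous_of_forall_isPoly hφ) isClosed_closure).resolve_right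
      fun hfin => hinf <| hfin.subset <| Set.image_subset_iff.2 fun p hp =>
        snoc_zero_mem_closure_graphOver_affineCone hp
  have hB : IrredDimGE 1 (φ '' Set.univ) := irredDimGE_univ.image (continuous_of_forall_isPoly hφ)
    (continuous_reindex fun _ => Fin.last _)
    (isClosed_setOf_polyMap_eq (fun i => (hφ i).comp fun _ => .apply _) .apply)
    fun b _ => funext fun i => by simp [φ, Subsingleton.elim i 0]
  have hBcl : φ '' Set.univ ⊆ closure (graphOver (g ∘ dehomogenize) (affineCone C)) := by
    rintro _ ⟨b, -, rfl⟩
    exact Set.eq_univ_iff_forall.1 haxis (b 0)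
  have hdisj : Disjoint (graphOver (g ∘ dehomogenize) (affineCone C)) (φ '' Set.univ) := by
    refine Set.disjoint_left.2 ?_
    rintro _ ⟨⟨hz, -⟩, -⟩ ⟨b, -, rfl⟩
    simp [φ] at hz
  obtain ⟨A, hA, hBA, hAcl⟩ := exists_irredDimGE_succ_of_disjoint hB hBcl hdisj
  have h0A : (0 : Fin (n + 1 + 1) → K) ∈ A :=
    hBA.subset ⟨0, trivial, by simp [φ, snoc_zero_zero]⟩
  obtain ⟨T, hT, -, hTA⟩ :=
    IrredDimGE.exists_fibre (k := 1) {Fin.last (n + 1)} (by simpa using hA) h0A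
  obtain ⟨z, hzT, hz⟩ := hT.infinite.exists_notMem_finset {0}
  exact ⟨z, hAcl (hTA hzT).1, by simpa using (hTA hzT).2, by simpa using hz⟩

theorem exists_eq_const_mul_of_finite_image_div {P h : (Fin n → K) → K} (hP : IsPoly P)
    (hh : IsPoly h) (hC : IsIrreducible C)
    (hfin : ((fun p => P p / h p) '' {p ∈ C | h p ≠ 0}).Finite) :
    (∀ p ∈ C, h p = 0) ∨ ∃ w, ∀ p ∈ C, P p = w * h p := by
  let S : Set (Set (Fin n → K)) := insert {p | h p = 0}
    ((fun w => {p | P p = w * h p}) '' ((fun p => P p / h p) '' {p ∈ C | h p ≠ 0}))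
  have hS : ∀ T ∈ S, IsClosed T := by
    rintro T (rfl | ⟨w, -, rfl⟩)
    exacts [hh.isClosed_eq (.const 0), hP.isClosed_eq ((IsPoly.const w).mul hh)]
  have hCS : C ⊆ ⋃₀ S := fun p hp => by
    by_cases hhp : h p = 0
    · exact ⟨_, Set.mem_insert _ _, hhp⟩
    · exact ⟨_, Set.mem_insert_of_mem _ ⟨_, ⟨p, ⟨hp, hhp⟩, rfl⟩, rfl⟩, (div_mul_cancel₀ _ hhp).symm⟩
  obtain ⟨T, rfl | ⟨w, -, rfl⟩, hCT⟩ :=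
    exists_subset_of_subset_sUnion hC ((hfin.image _).insert _) hS hCS
  exacts [.inl hCT, .inr ⟨w, hCT⟩]

end Ratio

section Bezout

theorem finite_graphOver_inter_of_finite {K : Type*} {C : Set (Fin 2 → K)}
    {g : (Fin 2 → K) → K} {c : K} (hfin : (C ∩ {q | q 0 = c}).Finite) :
    (graphOver g C ∩ {z | z 0 = c}).Finite := by
  refine (hfin.image fun q => Fin.snoc q (g q)).subset ?_
  rintro z ⟨⟨hzC, hzg⟩, hz⟩
  exact ⟨Fin.init z, ⟨hzC, hz⟩, (congrArg (Fin.snoc _) hzg.symm).trans (Fin.snoc_init_self z)⟩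

variable {K : Type*} [Field K]

/-- The product of the equations of the lines `y = a x + b` for `b ∈ s`. -/
def lineProd (a : K) (s : Finset K) (p : Fin 2 → K) : K := ∏ b ∈ s, (p 1 - a * p 0 - b)

theorem isPoly_lineProd (a : K) (s : Finset K) : IsPoly (lineProd a s) :=
  .prod s fun b => by fun_prop

theorem lineProd_eq_zero_iff {a : K} {s : Finset K} {p : Fin 2 → K} :
    lineProd a s p = 0 ↔ ∃ b ∈ s, p ∈ line a b := by
  simp only [lineProd, Finset.prod_eq_zero_iff, mem_line, sub_sub, sub_eq_zero]

theorem exists_lineProd_eq_mul {a b : K} {s : Finset K} (hb : b ∈ s) {p : Fin 2 → K}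
    (hp : p ∈ line a b) : ∃ Q, IsPoly Q ∧ Q p ≠ 0 ∧
      ∀ q, lineProd a s q = (q 1 - p 1 - a * (q 0 - p 0)) * Q q := by
  classical
  refine ⟨lineProd a (s.erase b), isPoly_lineProd a _, ?_, fun q => ?_⟩
  · rintro h
    obtain ⟨c, hc, hpc⟩ := lineProd_eq_zero_iff.1 h
    refine Finset.ne_of_mem_erase hc ?_
    linear_combination mem_line.1 hp - mem_line.1 hpc
  · rw [lineProd, ← Finset.mul_prod_erase s _ hb, ← lineProd]
    linear_combination (lineProd a (s.erase b) q) * mem_line.1 hp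

variable {C : Set (Fin 2 → K)}

-- Clearing denominators, `w h = P` says that the secant from `p` through `q` has slope
-- `(a Q + w A) / (Q - w B)`, which specializes to `a` at `q = p`, `w = 0`.
theorem secant_eq_of_mem_graphOver {P h Q A B : (Fin 2 → K) → K} {p : Fin 2 → K} {a : K}
    (hP : ∀ q, P q = (q 1 - p 1 - a * (q 0 - p 0)) * Q q)
    (hh : ∀ q, h q = A q * (q 0 - p 0) + B q * (q 1 - p 1)) {z : Fin (2 + 1) → K}
    (hz : z ∈ graphOver (fun q => P q / h q) {q ∈ C | h q ≠ 0}) :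
    (Q (Fin.init z) - z 2 * B (Fin.init z)) * (z 1 - p 1) =
      (a * Q (Fin.init z) + z 2 * A (Fin.init z)) * (z 0 - p 0) := by
  obtain ⟨⟨-, hhz⟩, hzP⟩ := hz
  have hmul : z 2 * h (Fin.init z) = P (Fin.init z) := (eq_div_iff hhz).1 hzP
  rw [hh, hP] at hmul
  change z 2 * (_ * (z 0 - p 0) + _ * (z 1 - p 1)) = (z 1 - p 1 - a * (z 0 - p 0)) * _ at hmul
  linear_combination -hmul

variable [ZariskiField K]

theorem isTangent_of_mem_closure_graphOver {P h Q A B : (Fin 2 → K) → K} (hQ : IsPoly Q)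
    (hA : IsPoly A) (hB : IsPoly B) {p : Fin 2 → K} {a : K} (hp : p ∈ C)
    (hfin : (C ∩ {q | q 0 = p 0}).Finite)
    (hP : ∀ q, P q = (q 1 - p 1 - a * (q 0 - p 0)) * Q q)
    (hh : ∀ q, h q = A q * (q 0 - p 0) + B q * (q 1 - p 1)) (hQp : Q p ≠ 0)
    (hcl : Fin.snoc p 0 ∈ closure (graphOver (fun q => P q / h q) {q ∈ C | h q ≠ 0})) :
    IsTangent C p a := by
  set G := graphOver (fun q => P q / h q) {q ∈ C | h q ≠ 0}
  let W : (Fin (2 + 1) → K) → K := fun z => Q (Fin.init z) - z 2 * B (Fin.init z)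
  let N : (Fin (2 + 1) → K) → K := fun z => a * Q (Fin.init z) + z 2 * A (Fin.init z)
  let φ : (Fin (2 + 1) → K) → Fin 5 → K := fun z => ![p 0, p 1, z 0, z 1, N z / W z]
  have hinit {f : (Fin 2 → K) → K} (hf : IsPoly f) :
      IsPoly fun z : Fin (2 + 1) → K => f (Fin.init z) := hf.comp fun _ => .apply _
  have hW : IsPoly W := (hinit hQ).sub ((IsPoly.apply 2).mul (hinit hB))
  have hN : IsPoly N := ((IsPoly.const a).mul (hinit hQ)).add ((IsPoly.apply 2).mul (hinit hA))
  have hφ : ContinuousOn φ {z | W z ≠ 0} := continuousOn_of_forall_isPoly_div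
    (p := ![fun z => p 0 * W z, fun z => p 1 * W z, fun z => z 0 * W z, fun z => z 1 * W z, N])
    (fun i => by fin_cases i <;> dsimp <;> fun_prop) hW
    fun z hz i => by fin_cases i <;> simp [φ, hz]
  have hWp : W (Fin.snoc p 0) ≠ 0 := by simpa [W, Fin.snoc] using hQp
  have hφp : φ (Fin.snoc p 0) = ![p 0, p 1, p 0, p 1, a] := by
    simp [φ, W, N, Fin.snoc, hQp]
  let V : Set (Fin (2 + 1) → K) := {z | W z ≠ 0} ∩ (G ∩ {z | z 0 = p 0})ᶜ
  have hG : (G ∩ {z | z 0 = p 0}).Finite :=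
    finite_graphOver_inter_of_finite (hfin.subset fun q hq => ⟨hq.1.1, hq.2⟩)
  have hV : IsOpen V := (hW.isClosed_eq (.const 0)).isOpen_compl.inter hG.isClosed.isOpen_compl
  have hpV : Fin.snoc p 0 ∈ V := ⟨hWp, fun hpG => hpG.1.1.2 (by simp [hh])⟩
  unfold IsTangent
  rw [← hφp]
  refine ((hφ _ hWp).mono fun z hz => hz.1.1).mem_closure (hV.inter_closure ⟨hpV, hcl⟩) ?_
  rintro z ⟨⟨hWz, hzp⟩, hz⟩
  have hne : z 0 ≠ p 0 := fun h0 => hzp ⟨hz, h0⟩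
  refine ⟨(vec_eta_two p).symm ▸ hp, ?_, hne.symm, ?_⟩
  · exact (vec_eta_two (Fin.init z)).symm ▸ hz.1.1
  · change z 1 - p 1 = N z / W z * (z 0 - p 0)
    rw [div_mul_eq_mul_div, eq_div_iff hWz, mul_comm]
    exact secant_eq_of_mem_graphOver hP hh hz

variable {f : MvPolynomial (Fin 2) K} {a : K} {s : Finset K}

-- `w f = ∏ (y - a x - b)` homogenizes to `w F = ∏ (y - a x - b z)`, with `F` of degree `#s`.
theorem exists_eq_of_mem_closure_graphOver_affineCone (hdeg : f.totalDegree ≤ s.card)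
    {z : Fin (2 + 1 + 1) → K} (hz : z ∈ closure (graphOver
      ((fun q => lineProd a s q / MvPolynomial.eval q f) ∘ dehomogenize)
      (affineCone {q ∈ C | MvPolynomial.eval q f ≠ 0}))) (hz₃ : z 3 = 0) :
    ∃ b ∈ s, z 1 = a * z 0 + b * z 2 := by
  obtain ⟨F, hF, hFeq⟩ := exists_homogenization hdeg
  have hclosed : IsClosed {z : Fin (2 + 1 + 1) → K |
      z 3 * F (Fin.init z) = ∏ b ∈ s, (z 1 - a * z 0 - b * z 2)} :=
    ((IsPoly.apply 3).mul (hF.comp fun _ => .apply _)).isClosed_eq (.prod s fun b => by fun_prop)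
  have hprod : z 3 * F (Fin.init z) = ∏ b ∈ s, (z 1 - a * z 0 - b * z 2) := by
    refine closure_minimal ?_ hclosed hz
    rintro w ⟨⟨hw, -, hfw⟩, hwg⟩
    have hw₂ : w 2 ≠ 0 := hw
    have hline (b : K) : w 1 - a * w 0 - b * w 2 =
        w 2 * (dehomogenize (Fin.init w) 1 - a * dehomogenize (Fin.init w) 0 - b) := by
      change _ = w 2 * (w 1 / w 2 - a * (w 0 / w 2) - b)
      field_simp
    have hF₂ : F (Fin.init w) =
        w 2 ^ s.card * MvPolynomial.eval (dehomogenize (Fin.init w)) f := hFeq _ hw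
    have hw₃ : w 3 * MvPolynomial.eval (dehomogenize (Fin.init w)) f =
        lineProd a s (dehomogenize (Fin.init w)) := (eq_div_iff hfw).1 hwg
    simp only [Set.mem_ofPred_eq, hline, Finset.prod_mul_distrib, Finset.prod_const]
    rw [← lineProd, ← hw₃, hF₂]
    ring
  rw [hz₃, zero_mul, eq_comm, Finset.prod_eq_zero_iff] at hprod
  obtain ⟨b, hb, hzb⟩ := hprod
  exact ⟨b, hb, by linear_combination hzb⟩

theorem IsGenericSlope.last_ne_zero_of_mem_closure_affineCone (ha : IsGenericSlope C a)
    {z : Fin (2 + 1) → K} (hz : z ∈ closure (affineCone C)) (hz₀ : z ≠ 0) {b : K}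
    (hzb : z 1 = a * z 0 + b * z 2) : z 2 ≠ 0 := by
  intro hz₂
  have hz₁ : z 1 = a * z 0 := by rw [hzb, hz₂, mul_zero, add_zero]
  have hx : z 0 ≠ 0 := fun hx => hz₀ <| by
    ext i
    fin_cases i
    exacts [hx, by simpa [hx] using hz₁, hz₂]
  refine ha.not_asymptotic ?_
  convert smul_mem_closure_affineCone hz (inv_ne_zero hx) using 1
  ext i
  fin_cases i
  · simp [hx]
  · simp [hz₁, mul_comm a, hx]
  · simp [hz₂]

theorem IsGenericSlope.finite_image_lineProd_div (ha : IsGenericSlope C a) (hC : IsClosed C)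
    (hvert : ∀ c, (C ∩ {p | p 0 = c}).Finite) (hdeg : f.totalDegree ≤ s.card)
    (hs : ∀ b ∈ s, ∀ p ∈ C ∩ line a b, MvPolynomial.eval p f = 0 ∧ ¬IsTangent C p a) :
    ((fun p => lineProd a s p / MvPolynomial.eval p f) ''
      {p ∈ C | MvPolynomial.eval p f ≠ 0}).Finite := by
  by_contra hinf
  obtain ⟨z, hz, hz₃, hz₀⟩ := exists_mem_closure_graphOver_affineCone_last_eq_zero hinf
  obtain ⟨b, hb, hzb⟩ := exists_eq_of_mem_closure_graphOver_affineCone hdeg hz hz₃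
  have hcone : Fin.init z ∈ closure (affineCone C) :=
    map_mem_closure continuous_init hz fun w hw => ⟨hw.1.1, hw.1.2.1⟩
  have hz₂ : z 2 ≠ 0 := ha.last_ne_zero_of_mem_closure_affineCone hcone (fun hinit => hz₀ <| by
    rw [← Fin.snoc_init_self z, hinit, hz₃, snoc_zero_zero]) hzb
  let p : Fin 2 → K := dehomogenize (Fin.init z)
  have hpC : p ∈ C := dehomogenize_mem_of_mem_closure hC hcone hz₂
  have hpl : p ∈ line a b := by
    change z 1 / z 2 = a * (z 0 / z 2) + b
    rw [hzb]
    field_simp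
  obtain ⟨hfp, htan⟩ := hs b hb p ⟨hpC, hpl⟩
  obtain ⟨Q, hQ, hQp, hQeq⟩ := exists_lineProd_eq_mul hb hpl
  obtain ⟨g, hg⟩ := exists_eval_sub_eval_eq_sum f p
  refine htan (isTangent_of_mem_closure_graphOver
    (h := fun q => MvPolynomial.eval q f) hQ (isPoly_eval (g 0)) (isPoly_eval (g 1)) hpC
    (hvert _) hQeq (fun q => ?_) hQp ?_)
  · rw [← Fin.sum_univ_two fun i => MvPolynomial.eval q (g i) * (q i - p i), ← hg, hfp, sub_zero]
  · have hclosure := snoc_dehomogenize_mem_closure_graphOver hz hz₂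
    rwa [hz₃] at hclosure

theorem IsGenericSlope.exists_lineProd_ne_zero (ha : IsGenericSlope C a) (hC : C.Infinite)
    (s : Finset K) : ∃ p ∈ C, lineProd a s p ≠ 0 := by
  by_contra! hzero
  refine hC <| (s.finite_toSet.biUnion fun b _ => ha.finite_inter_line b).subset fun p hp => ?_
  obtain ⟨b, hb, hpb⟩ := lineProd_eq_zero_iff.1 (hzero p hp)
  exact Set.mem_biUnion hb ⟨hp, hpb⟩

theorem IsGenericSlope.exists_eval_eq_const_mul_lineProd (ha : IsGenericSlope C a)
    (hC : IsCurve C) (hvert : ∀ c, (C ∩ {p | p 0 = c}).Finite) (hdeg : f.totalDegree ≤ s.card)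
    (hs : ∀ b ∈ s, ∀ p ∈ C ∩ line a b, MvPolynomial.eval p f = 0 ∧ ¬IsTangent C p a) :
    ∃ c, ∀ p ∈ C, MvPolynomial.eval p f = c * lineProd a s p := by
  rcases exists_eq_const_mul_of_finite_image_div (isPoly_lineProd a s) (isPoly_eval f)
    hC.irredDimGE_one.isIrreducible
    (ha.finite_image_lineProd_div hC.irredDimGE_one.isClosed hvert hdeg hs) with hf | ⟨w, hw⟩
  · exact ⟨0, fun p hp => by rw [hf p hp, zero_mul]⟩
  · obtain ⟨p₀, hp₀, hne⟩ := ha.exists_lineProd_ne_zero hC.irredDimGE_one.infinite s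
    have hw₀ : w ≠ 0 := fun hw₀ => hne (by rw [hw p₀ hp₀, hw₀, zero_mul])
    exact ⟨w⁻¹, fun p hp => by rw [hw p hp, inv_mul_cancel_left₀ hw₀]⟩

end Bezout

section PolynomialCount

theorem choose_add_two_two_mul_two (d : ℕ) : (d + 2).choose 2 * 2 = (d + 2) * (d + 1) := by
  rw [← Nat.add_one_mul_choose_eq (d + 1) 1, Nat.choose_one_right]

variable {K : Type*} [Field K]

theorem mem_vanishingIdeal_iff_eval {σ : Type*} {V : Set (σ → K)} {f : MvPolynomial σ K} :
    f ∈ MvPolynomial.vanishingIdeal K V ↔ ∀ p ∈ V, MvPolynomial.eval p f = 0 := by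
  simp [MvPolynomial.aeval_eq_eval]

theorem totalDegree_ne_zero_of_eval_eq_zero {σ : Type*} {f : MvPolynomial σ K} (hf : f ≠ 0)
    {p : σ → K} (hp : MvPolynomial.eval p f = 0) : f.totalDegree ≠ 0 := by
  intro hdeg
  rw [MvPolynomial.totalDegree_eq_zero_iff_eq_C] at hdeg
  rw [hdeg, MvPolynomial.eval_C] at hp
  exact hf (by rw [hdeg, hp, map_zero])

variable (K) in
theorem finrank_restrictTotalDegree (n d : ℕ) :
    Module.finrank K (MvPolynomial.restrictTotalDegree (Fin n) K d) = (d + n).choose n := by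
  have hset : {m : Fin n →₀ ℕ | (m.sum fun _ e => e) ≤ d} =
      ((Finset.range (d + 1)).biUnion fun k => Finset.univ.finsuppAntidiag k :
        Finset (Fin n →₀ ℕ)) := by
    ext m
    simp [Finsupp.sum_fintype]
  rw [MvPolynomial.restrictTotalDegree,
    Module.finrank_eq_nat_card_basis (MvPolynomial.basisRestrictSupport K _), hset,
    Nat.card_coe_set_eq, Set.ncard_coe_finset, Finset.card_biUnion, ← Nat.sum_range_multichoose]
  · simp [Finset.card_finsuppAntidiag_nat_eq_multichoose]
  · intro k _ l _ hkl
    refine Finset.disjoint_left.2 fun m hk hl => hkl ?_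
    rw [← (Finset.mem_finsuppAntidiag.1 hk).1, (Finset.mem_finsuppAntidiag.1 hl).1]

theorem finrank_le_card_add_finrank_inf_vanishingIdeal {σ : Type*}
    (V : Submodule K (MvPolynomial σ K)) [Module.Finite K V] (E : Finset (σ → K)) :
    Module.finrank K V ≤ E.card + Module.finrank K
      (V ⊓ (MvPolynomial.vanishingIdeal K (E : Set (σ → K))).restrictScalars K :
        Submodule K (MvPolynomial σ K)) := by
  let φ : MvPolynomial σ K →ₗ[K] (E → K) :=
    LinearMap.pi fun p => (MvPolynomial.aeval p.1).toLinearMap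
  have hker : LinearMap.ker φ =
      (MvPolynomial.vanishingIdeal K (E : Set (σ → K))).restrictScalars K := by
    ext g
    simp [φ, funext_iff]
  have hkerV : Module.finrank K (LinearMap.ker (φ.domRestrict V)) =
      Module.finrank K (V ⊓ LinearMap.ker φ : Submodule K (MvPolynomial σ K)) := by
    rw [LinearMap.ker_domRestrict, ← Submodule.map_comap_subtype]
    exact (Submodule.equivMapOfInjective _ V.injective_subtype _).finrank_eq
  rw [← hker, ← hkerV, ← LinearMap.finrank_range_add_finrank_ker (φ.domRestrict V)]
  gcongr
  simpa using Submodule.finrank_le (LinearMap.range (φ.domRestrict V))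

theorem exists_prime_vanishingIdeal_eq_span {C : Set (Fin 2 → K)}
    (hprime : (MvPolynomial.vanishingIdeal K C).IsPrime)
    (hbot : MvPolynomial.vanishingIdeal K C ≠ ⊥) (hC : C.Nontrivial) :
    ∃ f, Prime f ∧ MvPolynomial.vanishingIdeal K C = Ideal.span {f} := by
  obtain ⟨p, hp, q, hq, hpq⟩ := hC
  have hlt : MvPolynomial.vanishingIdeal K C < MvPolynomial.vanishingIdeal K {p} := by
    refine (MvPolynomial.vanishingIdeal_anti_mono (Set.singleton_subset_iff.2 hp)).lt_of_ne
      fun heq => hpq (funext fun i => ?_)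
    have hmem : MvPolynomial.X i - MvPolynomial.C (p i) ∈ MvPolynomial.vanishingIdeal K C := by
      simp [heq]
    simpa [sub_eq_zero, eq_comm] using hmem q hq
  have hdim : (MvPolynomial.vanishingIdeal K {p}).height ≤ 1 + 1 := by
    have hle := Ideal.height_le_ringKrullDim_of_isPrime (I := MvPolynomial.vanishingIdeal K {p})
    rw [MvPolynomial.ringKrullDim_of_isNoetherianRing, ringKrullDim_eq_zero_of_field,
      Nat.card_fin, zero_add] at hle
    exact WithBot.coe_le_coe.1 hle
  have hheight : (MvPolynomial.vanishingIdeal K C).height = 1 := le_antisymm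
    ((ENat.add_le_add_iff_right ENat.one_ne_top).1 <|
      (Ideal.height_add_one_le_of_lt_of_isPrime hlt).trans hdim)
    (Order.one_le_iff_ne_zero.2 <| mt Ideal.height_eq_zero_iff_eq_bot.1 hbot)
  obtain ⟨f, hf⟩ := UniqueFactorizationMonoid.isPrincipal_of_height_eq_one hheight
  replace hf : MvPolynomial.vanishingIdeal K C = Ideal.span {f} := hf
  rw [hf, Ne, Ideal.span_singleton_eq_bot] at hbot
  exact ⟨f, (Ideal.span_singleton_prime hbot).1 (hf ▸ hprime), hf⟩

theorem finrank_restrictTotalDegree_inf_span_le {n : ℕ} {f : MvPolynomial (Fin n) K}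
    (hf : f ≠ 0) (d : ℕ) :
    Module.finrank K (MvPolynomial.restrictTotalDegree (Fin n) K (f.totalDegree + d) ⊓
      (Ideal.span {f}).restrictScalars K : Submodule K (MvPolynomial (Fin n) K)) ≤
      (d + n).choose n := by
  have hle : (MvPolynomial.restrictTotalDegree (Fin n) K (f.totalDegree + d) ⊓
      (Ideal.span {f}).restrictScalars K : Submodule K (MvPolynomial (Fin n) K)) ≤
      (MvPolynomial.restrictTotalDegree (Fin n) K d).map (LinearMap.mulLeft K f) := by
    rintro _ ⟨hdeg, hspan⟩
    obtain ⟨g, rfl⟩ := Ideal.mem_span_singleton.1 hspan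
    refine ⟨g, ?_, rfl⟩
    rcases eq_or_ne g 0 with rfl | hg
    · exact Submodule.zero_mem _
    · rw [SetLike.mem_coe, MvPolynomial.mem_restrictTotalDegree,
        MvPolynomial.totalDegree_mul_of_isDomain hf hg] at hdeg
      exact (MvPolynomial.mem_restrictTotalDegree _ _ _).2 (Nat.le_of_add_le_add_left hdeg)
  rw [← finrank_restrictTotalDegree K n d]
  exact (Submodule.finrank_mono hle).trans (Submodule.finrank_map_le _ _)

end PolynomialCount

section LineRestriction

open Polynomial

section Ring

variable {R A B : Type*} [CommRing R] [CommRing A] [Algebra R A] [CommRing B] [Algebra R B]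

/-- The restriction of a polynomial `f(x, y)` to the line `y = a x + b`, as a polynomial in `x`.
The coefficients `a`, `b` may lie in an `R`-algebra: the generic line has `a` and `b` transcendental
over `R`. -/
noncomputable def lineRestriction (a b : A) : MvPolynomial (Fin 2) R →ₐ[R] A[X] :=
  MvPolynomial.aeval ![X, C a * X + C b]

theorem map_lineRestriction (φ : A →ₐ[R] B) (a b : A) (f : MvPolynomial (Fin 2) R) :
    (lineRestriction a b f).map (φ : A →+* B) = lineRestriction (φ a) (φ b) f := by
  change Polynomial.mapAlgHom φ (lineRestriction a b f) = _
  rw [lineRestriction, MvPolynomial.comp_aeval_apply, lineRestriction]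
  congr 2
  ext i : 1
  fin_cases i <;> simp

theorem eval_lineRestriction (a b x : R) (f : MvPolynomial (Fin 2) R) :
    (lineRestriction a b f).eval x = MvPolynomial.eval ![x, a * x + b] f := by
  rw [← Polynomial.coe_aeval_eq_eval, lineRestriction, MvPolynomial.comp_aeval_apply,
    ← MvPolynomial.aeval_eq_eval]
  congr 2
  ext i
  fin_cases i <;> simp

theorem natDegree_lineRestriction_le (a b : R) (f : MvPolynomial (Fin 2) R) :
    (lineRestriction a b f).natDegree ≤ f.totalDegree := by
  refine (MvPolynomial.aeval_natDegree_le (n := 1) f le_rfl _ fun i => ?_).trans_eq (mul_one _)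
  fin_cases i
  exacts [natDegree_X_le, natDegree_linear_le]

theorem dvd_of_lineRestriction_eq_zero {a b : R} {f : MvPolynomial (Fin 2) R}
    (hf : lineRestriction a b f = 0) :
    MvPolynomial.X 1 - MvPolynomial.C a * MvPolynomial.X 0 - MvPolynomial.C b ∣ f := by
  let ℓ : MvPolynomial (Fin 2) R :=
    MvPolynomial.X 1 - MvPolynomial.C a * MvPolynomial.X 0 - MvPolynomial.C b
  let π := Ideal.Quotient.mkₐ R (Ideal.span {ℓ})
  -- Modulo `ℓ`, every polynomial equals its restriction to the line.
  have hπ : π = (Polynomial.aeval (π (MvPolynomial.X 0))).comp (lineRestriction a b) := by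
    have hℓ : π ℓ = 0 := Ideal.Quotient.eq_zero_iff_mem.2 (Ideal.mem_span_singleton_self ℓ)
    have hπC (c : R) : π (MvPolynomial.C c) = algebraMap R _ c := π.commutes c
    simp only [ℓ, map_sub, map_mul, hπC] at hℓ
    refine MvPolynomial.algHom_ext fun i => ?_
    fin_cases i
    · simp [lineRestriction]
    · simp only [Fin.mk_one, AlgHom.comp_apply, lineRestriction, MvPolynomial.aeval_X,
        Matrix.cons_val_one, Matrix.cons_val_fin_one, map_add, map_mul, aeval_X, aeval_C]
      linear_combination hℓ
  refine Ideal.mem_span_singleton.1 (Ideal.Quotient.eq_zero_iff_mem.1 ?_)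
  change π f = 0
  rw [hπ, AlgHom.comp_apply, hf, map_zero]

end Ring

variable {K : Type*} [Field K]

theorem setOf_eval_eq_zero_inter_line {a b : K} {f : MvPolynomial (Fin 2) K}
    (hf : lineRestriction a b f ≠ 0) :
    {p | MvPolynomial.eval p f = 0} ∩ line a b =
      (fun x => ![x, a * x + b]) '' (lineRestriction a b f).rootSet K := by
  ext p
  simp only [Set.mem_inter_iff, Set.mem_ofPred_eq, mem_line, Set.mem_image, mem_rootSet_of_ne hf,
    coe_aeval_eq_eval, eval_lineRestriction]
  constructor
  · rintro ⟨hfp, hp⟩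
    exact ⟨p 0, by rwa [← hp, vec_eta_two], by rw [← hp, vec_eta_two]⟩
  · rintro ⟨x, hfx, rfl⟩
    exact ⟨hfx, rfl⟩

theorem finite_setOf_eval_eq_zero_inter_line {a b : K} {f : MvPolynomial (Fin 2) K}
    (hf : lineRestriction a b f ≠ 0) : ({p | MvPolynomial.eval p f = 0} ∩ line a b).Finite := by
  rw [setOf_eval_eq_zero_inter_line hf]
  exact (rootSet_finite _ _).image _

theorem ncard_setOf_eval_eq_zero_inter_line {a b : K} {f : MvPolynomial (Fin 2) K}
    (hf : lineRestriction a b f ≠ 0) :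
    ({p | MvPolynomial.eval p f = 0} ∩ line a b).ncard =
      ((lineRestriction a b f).rootSet K).ncard := by
  rw [setOf_eval_eq_zero_inter_line hf]
  exact Set.ncard_image_of_injective _ fun x y hxy => congrFun hxy 0

theorem ncard_rootSet_le_natDegree (g : K[X]) : (g.rootSet K).ncard ≤ g.natDegree := by
  classical
  rw [rootSet, aroots_def, Set.ncard_coe_finset]
  refine (Multiset.toFinset_card_le _).trans ?_
  simpa using card_roots' g

theorem ncard_rootSet_eq_iff [IsAlgClosed K] {g : K[X]} {d : ℕ} (hg : g.natDegree ≤ d)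
    (hd : d ≠ 0) : (g.rootSet K).ncard = d ↔ g.natDegree = d ∧ g.Separable := by
  rcases eq_or_ne g 0 with rfl | hg₀
  · simp [hd.symm]
  have hsep : (g.rootSet K).ncard = g.natDegree ↔ g.Separable := by
    rw [← Nat.card_coe_set_eq, Nat.card_eq_fintype_card,
      card_rootSet_eq_natDegree_iff_of_splits hg₀ (IsAlgClosed.splits _)]
  constructor
  · intro hcard
    have hdeg : g.natDegree = d := hg.antisymm (hcard ▸ ncard_rootSet_le_natDegree g)
    exact ⟨hdeg, hsep.1 (hcard.trans hdeg.symm)⟩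
  · rintro ⟨hdeg, hg'⟩
    exact (hsep.2 hg').trans hdeg

theorem resultant_derivative_ne_zero_iff {g : K[X]} (hg : g.natDegree ≠ 0) :
    resultant g (derivative g) g.natDegree g.natDegree ≠ 0 ↔ g.Separable := by
  have hg₀ : g ≠ 0 := by
    rintro rfl
    exact hg natDegree_zero
  obtain ⟨k, hk⟩ := Nat.exists_eq_add_of_le
    ((natDegree_derivative_le g).trans (Nat.sub_le _ _))
  have hres : resultant g (derivative g) g.natDegree g.natDegree =
      g.leadingCoeff ^ k * resultant g (derivative g) :=
    calc
      _ = resultant g (derivative g) g.natDegree ((derivative g).natDegree + k) := by rw [← hk]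
      _ = _ := resultant_add_right_deg _ _ _ _ _ le_rfl
  simp [hres, hg₀, resultant_eq_zero_iff, Polynomial.Separable]

theorem exists_eval_ne_zero_iff_ncard_rootSet_eq [IsAlgClosed K] {f : MvPolynomial (Fin 2) K}
    (hf : f.totalDegree ≠ 0) : ∃ D : MvPolynomial (Fin 2) K, ∀ q, MvPolynomial.eval q D ≠ 0 ↔
      ((lineRestriction (q 0) (q 1) f).rootSet K).ncard = f.totalDegree := by
  let g : (MvPolynomial (Fin 2) K)[X] := lineRestriction (MvPolynomial.X 0) (MvPolynomial.X 1) f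
  refine ⟨g.coeff f.totalDegree * resultant g (derivative g) f.totalDegree f.totalDegree,
    fun q => ?_⟩
  have hg : g.map (MvPolynomial.eval q) = lineRestriction (q 0) (q 1) f := by
    have hmap := map_lineRestriction (MvPolynomial.aeval q) (MvPolynomial.X 0) (MvPolynomial.X 1) f
    simpa using hmap
  rw [ncard_rootSet_eq_iff (natDegree_lineRestriction_le _ _ f) hf, map_mul, ← resultant_map_map,
    ← derivative_map, ← coeff_map, hg, mul_ne_zero_iff]
  constructor
  · rintro ⟨hcoeff, hres⟩
    have hdeg := (natDegree_lineRestriction_le _ _ f).antisymm (le_natDegree_of_ne_zero hcoeff)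
    rw [← hdeg] at hf hres
    exact ⟨hdeg, (resultant_derivative_ne_zero_iff hf).1 hres⟩
  · rintro ⟨hdeg, hsep⟩
    rw [← hdeg] at hf ⊢
    exact ⟨leadingCoeff_ne_zero.2 hsep.ne_zero, (resultant_derivative_ne_zero_iff hf).2 hsep⟩

theorem exists_forall_ncard_inter_line_eq [IsAlgClosed K] {C : Set (Fin 2 → K)}
    {f : MvPolynomial (Fin 2) K} (hf : f.totalDegree ≠ 0)
    (hC : C ⊆ {p | MvPolynomial.eval p f = 0})
    (hfin : ({p | MvPolynomial.eval p f = 0} \ C).Finite) {a b : K}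
    (hab : f.totalDegree ≤ ((lineRestriction a b f).rootSet K).ncard) :
    ∃ F : MvPolynomial (Fin 2) K, F ≠ 0 ∧ ∀ q, MvPolynomial.eval q F ≠ 0 →
      (C ∩ line (q 0) (q 1)).Finite ∧ (C ∩ line (q 0) (q 1)).ncard = f.totalDegree := by
  obtain ⟨D, hD⟩ := exists_eval_ne_zero_iff_ncard_rootSet_eq hf
  have hD₀ : D ≠ 0 := by
    rintro rfl
    have hab' := (ncard_rootSet_le_natDegree _).trans (natDegree_lineRestriction_le a b f)
    exact (hD ![a, b]).2 (hab'.antisymm hab) (map_zero _)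
  -- `pencil p` vanishes at `(a, b)` exactly when the line `y = a x + b` passes through `p`.
  let pencil (p : Fin 2 → K) : MvPolynomial (Fin 2) K :=
    MvPolynomial.C (p 1) - MvPolynomial.X 0 * MvPolynomial.C (p 0) - MvPolynomial.X 1
  have hpencil (p : Fin 2 → K) : pencil p ≠ 0 := fun h => by
    simpa [pencil] using congrArg (MvPolynomial.eval ![0, p 1 + 1]) h
  refine ⟨D * ∏ p ∈ hfin.toFinset, pencil p,
    mul_ne_zero hD₀ (Finset.prod_ne_zero_iff.2 fun p _ => hpencil p), fun q hq => ?_⟩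
  rw [map_mul, mul_ne_zero_iff, map_prod, Finset.prod_ne_zero_iff, hD] at hq
  obtain ⟨hcard, hq⟩ := hq
  have hline : lineRestriction (q 0) (q 1) f ≠ 0 := fun h => hf <| by
    rw [← hcard, h, rootSet_zero, Set.ncard_empty]
  have hinter : C ∩ line (q 0) (q 1) =
      {p | MvPolynomial.eval p f = 0} ∩ line (q 0) (q 1) := by
    refine (Set.inter_subset_inter_left _ hC).antisymm fun p ⟨hfp, hp⟩ => ⟨?_, hp⟩
    by_contra hpC
    exact hq p (hfin.mem_toFinset.2 ⟨hfp, hpC⟩) (by simp [pencil, mem_line.1 hp])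
  rw [hinter]
  exact ⟨finite_setOf_eval_eq_zero_inter_line hline,
    (ncard_setOf_eval_eq_zero_inter_line hline).trans hcard⟩

end LineRestriction

section Degree

variable {K : Type*} [Field K] [ZariskiField K] {C : Set (Fin 2 → K)} {a : K}

theorem isPrime_vanishingIdeal {n : ℕ} {V : Set (Fin n → K)} (hV : IsIrreducible V) :
    (MvPolynomial.vanishingIdeal K V).IsPrime := by
  obtain ⟨⟨p, hp⟩, hirr⟩ := hV
  have hclosed (f : MvPolynomial (Fin n) K) : IsClosed {x | MvPolynomial.eval x f = 0} :=
    (isPoly_eval f).isClosed_eq (.const 0)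
  refine ⟨(Ideal.ne_top_iff_one _).2 fun hone => ?_, fun {f g} hfg => ?_⟩
  · simpa using mem_vanishingIdeal_iff_eval.1 hone p hp
  · simp only [mem_vanishingIdeal_iff_eval] at hfg ⊢
    exact isPreirreducible_iff_isClosed_union_isClosed.1 hirr _ _ (hclosed f) (hclosed g)
      fun x hx => mul_eq_zero.1 ((map_mul (MvPolynomial.eval x) f g).symm.trans (hfg x hx))

theorem inter_line_eq_image {K : Type*} [Field K] (C : Set (Fin 2 → K)) (a b : K) :
    C ∩ line a b = (fun x => ![x, a * x + b]) '' {x | ![x, a * x + b] ∈ C} := by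
  ext p
  constructor
  · rintro ⟨hpC, hp⟩
    have hp' : ![p 0, a * p 0 + b] = p := by rw [← mem_line.1 hp, vec_eta_two]
    exact ⟨p 0, hp'.symm ▸ hpC, hp'⟩
  · rintro ⟨x, hx, rfl⟩
    exact ⟨hx, rfl⟩

namespace IsGenericSlope

theorem exists_ncard_inter_line_le (ha : IsGenericSlope C a) (hC : IsClosed C) :
    ∃ M, ∀ b, (C ∩ line a b).ncard ≤ M := by
  have := infinite_of_zariskiField K
  have hφ : Continuous fun v : Fin (1 + 1) → K => ![v 1, a * v 1 + v 0] :=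
    continuous_of_forall_isPoly fun i => by fin_cases i <;> dsimp <;> fun_prop
  obtain ⟨M, hM⟩ := ZariskiField.geometry.Z2 1 _ (hC.preimage hφ)
  refine ⟨M, fun b => ?_⟩
  have hinj : Function.Injective fun x : K => ![x, a * x + b] := fun x y hxy => congrFun hxy 0
  have hfin := ha.finite_inter_line b
  rw [inter_line_eq_image, Set.finite_image_iff hinj.injOn] at hfin
  rw [inter_line_eq_image, Set.ncard_image_of_injective _ hinj]
  exact ((hM ![b]).resolve_left fun huniv => Set.infinite_univ (huniv ▸ hfin)).2

theorem finite_setOf_exists_isTangent (ha : IsGenericSlope C a) :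
    {b | ∃ p ∈ C ∩ line a b, IsTangent C p a}.Finite := by
  refine (ha.finite_isTangent.image fun p => p 1 - a * p 0).subset ?_
  rintro b ⟨p, ⟨hpC, hp⟩, htan⟩
  exact ⟨p, ⟨hpC, htan⟩, by linear_combination mem_line.1 hp⟩

theorem finrank_restrictTotalDegree_le (ha : IsGenericSlope C a) (hC : IsCurve C)
    (hvert : ∀ c, (C ∩ {p | p 0 = c}).Finite) {r : ℕ}
    (hr : {b | (C ∩ line a b).ncard ≤ r}.Infinite) (d : ℕ) :
    Module.finrank K (MvPolynomial.restrictTotalDegree (Fin 2) K d) ≤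
      d * r + 1 + Module.finrank K (MvPolynomial.restrictTotalDegree (Fin 2) K d ⊓
        (MvPolynomial.vanishingIdeal K C).restrictScalars K :
          Submodule K (MvPolynomial (Fin 2) K)) := by
  classical
  obtain ⟨s, hs, rfl⟩ := (hr.sdiff ha.finite_setOf_exists_isTangent).exists_subset_card_eq d
  obtain ⟨p₀, hp₀, hne⟩ := ha.exists_lineProd_ne_zero hC.irredDimGE_one.infinite s
  let E : Finset (Fin 2 → K) := insert p₀ (s.biUnion fun b => (ha.finite_inter_line b).toFinset)
  have hcard : E.card ≤ s.card * r + 1 := by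
    refine (Finset.card_insert_le _ _).trans (Nat.add_le_add_right ?_ 1)
    refine Finset.card_biUnion_le_card_mul _ _ _ fun b hb => ?_
    rw [← Set.ncard_eq_toFinset_card _ (ha.finite_inter_line b)]
    exact (hs hb).1
  have hE : MvPolynomial.restrictTotalDegree (Fin 2) K s.card ⊓
      (MvPolynomial.vanishingIdeal K (E : Set (Fin 2 → K))).restrictScalars K ≤
      MvPolynomial.restrictTotalDegree (Fin 2) K s.card ⊓
        (MvPolynomial.vanishingIdeal K C).restrictScalars K := by
    rintro f ⟨hdeg, hfE⟩
    replace hfE := mem_vanishingIdeal_iff_eval.1 hfE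
    refine ⟨hdeg, mem_vanishingIdeal_iff_eval.2 fun p hp => ?_⟩
    obtain ⟨c, hc⟩ := ha.exists_eval_eq_const_mul_lineProd hC hvert
      ((MvPolynomial.mem_restrictTotalDegree _ _ _).1 hdeg) fun b hb q hq =>
        ⟨hfE q (Finset.mem_insert_of_mem <| Finset.mem_biUnion.2 ⟨b, hb, by simpa using hq⟩),
          fun htan => (hs hb).2 ⟨q, hq, htan⟩⟩
    have hc₀ : c = 0 := (mul_eq_zero.1 <|
      (hc p₀ hp₀).symm.trans (hfE p₀ (Finset.mem_insert_self _ _))).resolve_right hne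
    rw [hc p hp, hc₀, zero_mul]
  exact (finrank_le_card_add_finrank_inf_vanishingIdeal _ E).trans
    (Nat.add_le_add hcard (Submodule.finrank_mono hE))

theorem vanishingIdeal_ne_bot (ha : IsGenericSlope C a) (hC : IsCurve C)
    (hvert : ∀ c, (C ∩ {p | p 0 = c}).Finite) : MvPolynomial.vanishingIdeal K C ≠ ⊥ := by
  have := infinite_of_zariskiField K
  intro hbot
  obtain ⟨M, hM⟩ := ha.exists_ncard_inter_line_le hC.irredDimGE_one.isClosed
  have hcount := ha.finrank_restrictTotalDegree_le hC hvert (r := M)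
    (by simpa [hM] using Set.infinite_univ) (2 * M + 2)
  rw [hbot, Submodule.restrictScalars_bot, inf_bot_eq, finrank_bot,
    finrank_restrictTotalDegree] at hcount
  have hchoose := choose_add_two_two_mul_two (2 * M + 2)
  nlinarith

theorem finite_setOf_ncard_inter_line_lt (ha : IsGenericSlope C a) (hC : IsCurve C)
    (hvert : ∀ c, (C ∩ {p | p 0 = c}).Finite) {f : MvPolynomial (Fin 2) K} (hf : f ≠ 0)
    (hspan : MvPolynomial.vanishingIdeal K C = Ideal.span {f}) :
    {b | (C ∩ line a b).ncard < f.totalDegree}.Finite := by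
  by_contra hinf
  obtain ⟨e, he⟩ : ∃ e, f.totalDegree = e + 1 := by
    refine Nat.exists_eq_add_one_of_ne_zero fun h => hinf ?_
    simp [h]
  have hcount := ha.finrank_restrictTotalDegree_le hC hvert (r := e)
    (by simpa only [he, Nat.lt_succ_iff, Set.Infinite] using hinf) (f.totalDegree + (e + 1) ^ 2)
  have hle := hcount.trans
    (Nat.add_le_add_left (hspan ▸ finrank_restrictTotalDegree_inf_span_le hf _) _)
  rw [finrank_restrictTotalDegree, he] at hle
  have hchoose₁ := choose_add_two_two_mul_two (e + 1 + (e + 1) ^ 2)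
  have hchoose₂ := choose_add_two_two_mul_two ((e + 1) ^ 2)
  nlinarith

theorem lineRestriction_ne_zero (ha : IsGenericSlope C a) (hC : C.Infinite)
    {f : MvPolynomial (Fin 2) K} (hf : Irreducible f)
    (hfC : ∀ p ∈ C, MvPolynomial.eval p f = 0) (b : K) :
    lineRestriction a b f ≠ 0 := by
  intro hzero
  obtain ⟨g, rfl⟩ := dvd_of_lineRestriction_eq_zero hzero
  rcases hf.isUnit_or_isUnit rfl with hunit | hunit
  · simpa using hunit.map (MvPolynomial.eval ![0, b])
  · refine hC ((ha.finite_inter_line b).subset fun p hp => ⟨hp, ?_⟩)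
    have hline := (mul_eq_zero.1 ((map_mul _ _ _).symm.trans (hfC p hp))).resolve_right
      (hunit.map (MvPolynomial.eval p)).ne_zero
    simp only [map_sub, map_mul, MvPolynomial.eval_X, MvPolynomial.eval_C] at hline
    exact mem_line.2 (by linear_combination hline)

end IsGenericSlope

theorem finite_setOf_eval_eq_zero_sdiff {K : Type*} [Field K] {C : Set (Fin 2 → K)} {a : K}
    {f : MvPolynomial (Fin 2) K} (hfC : C ⊆ {p | MvPolynomial.eval p f = 0})
    (hline : ∀ b, lineRestriction a b f ≠ 0)
    (hfin : {b | (C ∩ line a b).ncard < f.totalDegree}.Finite) :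
    ({p | MvPolynomial.eval p f = 0} \ C).Finite := by
  refine (hfin.biUnion fun b _ => finite_setOf_eval_eq_zero_inter_line (hline b)).subset ?_
  rintro p ⟨hp, hpC⟩
  have hpl : p ∈ line a (p 1 - a * p 0) := mem_line.2 (by ring)
  refine Set.mem_biUnion (x := p 1 - a * p 0) ?_ ⟨hp, hpl⟩
  calc
    (C ∩ line a (p 1 - a * p 0)).ncard <
        ({p | MvPolynomial.eval p f = 0} ∩ line a (p 1 - a * p 0)).ncard :=
      Set.ncard_lt_ncard ⟨Set.inter_subset_inter_left _ hfC, fun h => hpC (h ⟨hp, hpl⟩).1⟩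
        (finite_setOf_eval_eq_zero_inter_line (hline _))
    _ ≤ f.totalDegree := by
      rw [ncard_setOf_eval_eq_zero_inter_line (hline _)]
      exact (ncard_rootSet_le_natDegree _).trans (natDegree_lineRestriction_le _ _ _)

namespace IsCurve

theorem exists_forall_ncard_inter_line_eq_of_finite_vertical [IsAlgClosed K] (hC : IsCurve C)
    (hvert : ∀ c, (C ∩ {p | p 0 = c}).Finite) :
    ∃ (m : ℕ) (F : MvPolynomial (Fin 2) K), F ≠ 0 ∧ ∀ q, MvPolynomial.eval q F ≠ 0 →
      (C ∩ line (q 0) (q 1)).Finite ∧ (C ∩ line (q 0) (q 1)).ncard = m := by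
  have := infinite_of_zariskiField K
  have hinf := hC.irredDimGE_one.infinite
  obtain ⟨a, ha⟩ := hC.exists_isGenericSlope hvert
  obtain ⟨f, hf, hspan⟩ := exists_prime_vanishingIdeal_eq_span
    (isPrime_vanishingIdeal hC.irredDimGE_one.isIrreducible) (ha.vanishingIdeal_ne_bot hC hvert)
    hinf.nontrivial
  have hfC : C ⊆ {p | MvPolynomial.eval p f = 0} :=
    mem_vanishingIdeal_iff_eval.1 (hspan ▸ Ideal.mem_span_singleton_self f)
  have hfew := ha.finite_setOf_ncard_inter_line_lt hC hvert hf.ne_zero hspan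
  have hline := ha.lineRestriction_ne_zero hinf hf.irreducible hfC
  obtain ⟨b, hb⟩ := hfew.exists_notMem
  have hroots : f.totalDegree ≤ ((lineRestriction a b f).rootSet K).ncard := by
    rw [← ncard_setOf_eval_eq_zero_inter_line (hline b)]
    exact (not_lt.1 hb).trans <| Set.ncard_le_ncard (Set.inter_subset_inter_left _ hfC)
      (finite_setOf_eval_eq_zero_inter_line (hline b))
  have hdeg : f.totalDegree ≠ 0 :=
    totalDegree_ne_zero_of_eval_eq_zero hf.ne_zero (hfC hinf.nonempty.some_mem)
  exact ⟨f.totalDegree, exists_forall_ncard_inter_line_eq hdeg hfC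
    (finite_setOf_eval_eq_zero_sdiff hfC hline hfew) hroots⟩

theorem eq_setOf_apply_zero_eq (hC : IsCurve C) {c : K} (hc : (C ∩ {p | p 0 = c}).Infinite) :
    C = {p | p 0 = c} := by
  have hsub : C ⊆ {p | p 0 = c} := (hC.subset_or_finite_inter
    ((IsPoly.apply 0).isClosed_eq (.const c))).resolve_right hc
  have hvec (p : Fin 2 → K) (hp : p 0 = c) : ![c, p 1] = p := by rw [← hp, vec_eta_two]
  have hφ : Continuous fun y : Fin 1 → K => ![c, y 0] :=
    continuous_of_forall_isPoly fun i => by fin_cases i <;> dsimp <;> fun_prop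
  rcases eq_univ_or_finite_setOf_line hφ hC.irredDimGE_one.isClosed with huniv | hfin
  · refine hsub.antisymm fun p hp => ?_
    exact hvec p hp ▸ Set.eq_univ_iff_forall.1 huniv (p 1)
  · refine (hC.irredDimGE_one.infinite ((hfin.image fun y => ![c, y]).subset fun p hp => ?_)).elim
    exact ⟨p 1, by simpa [hvec p (hsub hp)] using hp, hvec p (hsub hp)⟩

theorem exists_forall_ncard_inter_line_eq [IsAlgClosed K] (hC : IsCurve C) :
    ∃ (m : ℕ) (F : MvPolynomial (Fin 2) K), F ≠ 0 ∧ ∀ q, MvPolynomial.eval q F ≠ 0 →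
      (C ∩ line (q 0) (q 1)).Finite ∧ (C ∩ line (q 0) (q 1)).ncard = m := by
  by_cases hvert : ∀ c, (C ∩ {p | p 0 = c}).Finite
  · exact hC.exists_forall_ncard_inter_line_eq_of_finite_vertical hvert
  · obtain ⟨c, hc⟩ := not_forall.1 hvert
    obtain rfl := hC.eq_setOf_apply_zero_eq hc
    refine ⟨1, 1, one_ne_zero, fun q _ => ?_⟩
    have hpoint : {p | p 0 = c} ∩ line (q 0) (q 1) = {![c, q 0 * c + q 1]} := by
      ext p
      rw [Set.mem_singleton_iff]
      constructor
      · rintro ⟨hp, hpl⟩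
        rw [← show p 0 = c from hp, ← mem_line.1 hpl, vec_eta_two]
      · rintro rfl
        exact ⟨rfl, rfl⟩
    rw [hpoint]
    exact ⟨Set.finite_singleton _, Set.ncard_singleton _⟩

end IsCurve

theorem isOpen_zariskiTopology_setOf_eval_ne_zero {K : Type*} [Field K] {n : ℕ}
    (F : MvPolynomial (Fin n) K) :
    IsOpen[zariskiTopology K n] {q | MvPolynomial.eval q F ≠ 0} := by
  refine isOpen_generateFrom_of_mem ⟨{F}, ?_⟩
  ext q
  simp

end Degree

end ZariskiGeometry

open ZariskiGeometry in
/-- The degree of a plane curve of a Zariski geometry refining the Zariski topology on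
an algebraically closed field is well defined: there are `m : ℕ` and a nonempty
Zariski-open set `U` of parameters `(a, b)` such that every line `y = a·x + b` with
`(a, b) ∈ U` meets the curve in exactly `m` points. -/
theorem degree_of_plane_curve_well_defined
    {K : Type*} [Field K] [IsAlgClosed K] (Z : ZariskiGeometry K)
    (hrefine : ∀ (n : ℕ) (C : Set (Fin n → K)), ZariskiClosedSet K C → IsClosed[Z.τ n] C)
    (C : Set (Fin 2 → K)) (hCcl : IsClosed[Z.τ 2] C)
    (hCirr : @IsIrreducible _ (Z.τ 2) C)
    (hCdim : setKrullDim (Z.τ 2) C = 1) :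
    ∃ (m : ℕ) (U : Set (Fin 2 → K)), U.Nonempty ∧ IsOpen[zariskiTopology K 2] U ∧
      ∀ q ∈ U,
        (C ∩ {p : Fin 2 → K | p 1 = q 0 * p 0 + q 1}).Finite ∧
        (C ∩ {p : Fin 2 → K | p 1 = q 0 * p 0 + q 1}).ncard = m := by
  let : ZariskiField K := ⟨Z, hrefine⟩
  have := infinite_of_zariskiField K
  have hdim (k : ℕ) : IrredDimGE k C ↔ (k : WithBot ℕ∞) ≤ 1 := by
    rw [irredDimGE_iff_le_setKrullDim hCirr hCcl, ← hCdim]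
  have hC : IsCurve C := ⟨(hdim 1).2 le_rfl, fun h => absurd ((hdim 2).1 h) (by decide)⟩
  obtain ⟨m, F, hF, hcard⟩ := hC.exists_forall_ncard_inter_line_eq
  obtain ⟨q, hq⟩ : ∃ q, MvPolynomial.eval q F ≠ 0 := by
    by_contra! hzero
    exact hF (MvPolynomial.funext fun q => by rw [hzero q, map_zero])
  exact ⟨m, {q | MvPolynomial.eval q F ≠ 0}, ⟨q, hq⟩,
    isOpen_zariskiTopology_setOf_eval_ne_zero F, hcard⟩
end
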